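/- arXiv:2103.00715 — 3 statements merged into one kernel-verified Lean document; each statement's English description precedes it below -/
import Mathlib

section
/- For every a ∈ ℝ, the left fast-forwarding map N_a^l : D_{a,∞}([0,∞),ℝ) → D([0,∞),ℝ) is measurable with respect to the Borel σ-algebras induced by the Skorokhod J1 topology (on the domain, the trace σ-algebra on D_{a,∞}([0,∞),ℝ)). -/
open MeasureTheory Set Filter Topology

noncomputable section

/-- `f` is càdlàg on `[0,∞)`: right-continuous at every `t ≥ 0` and with left limits
at every `t > 0`. -/
def IsCadlag (f : ℝ → ℝ) : Prop :=
  (∀ t : ℝ, 0 ≤ t → Tendsto f (𝓝[≥] t) (𝓝 (f t))) ∧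
  (∀ t : ℝ, 0 < t → ∃ L : ℝ, Tendsto f (𝓝[<] t) (𝓝 L))

/-- A Skorokhod time change on `[0,T]`: a strictly increasing continuous bijection of
`[0,T]` onto itself. -/
def IsTimeChange (T : ℝ) (γ : ℝ → ℝ) : Prop :=
  ContinuousOn γ (Icc 0 T) ∧ StrictMonoOn γ (Icc 0 T) ∧ γ 0 = 0 ∧ γ T = T

/-- The Skorokhod `J1` metric on `D([0,T],ℝ)`:
`d_{J1,T}(f,g) = inf_γ max( sup_{t∈[0,T]} |γ(t)−t| , sup_{t∈[0,T]} |f(γ(t))−g(t)| )`. -/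
noncomputable def dJ1T (T : ℝ) (f g : ℝ → ℝ) : ℝ :=
  sInf {r : ℝ | 0 ≤ r ∧ ∃ γ : ℝ → ℝ, IsTimeChange T γ ∧
    (∀ t ∈ Icc (0:ℝ) T, |γ t - t| ≤ r) ∧ (∀ t ∈ Icc (0:ℝ) T, |f (γ t) - g t| ≤ r)}

/-- The smoothed restriction `f|_m` of `f` to `[0,m]`. -/
noncomputable def restrictD (m : ℝ) (f : ℝ → ℝ) : ℝ → ℝ :=
  fun t => if t ≤ m - 1 then f t else (m - t) * f t

/-- The Skorokhod `J1` metric on `D([0,∞),ℝ)`: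
`d_{J1}(f,g) = Σ_{m=1}^∞ 2^{−m} (1 ∧ d_{J1,m}(f|_m, g|_m))`. -/
noncomputable def dJ1 (f g : ℝ → ℝ) : ℝ :=
  ∑' m : ℕ, (2:ℝ)⁻¹ ^ (m + 1) *
    min 1 (dJ1T ((m:ℝ) + 1) (restrictD ((m:ℝ) + 1) f) (restrictD ((m:ℝ) + 1) g))

/-- `A_f(t) = ∫₀^t 1{f(z) > a} dz`. -/
noncomputable def occUpper (a : ℝ) (f : ℝ → ℝ) (t : ℝ) : ℝ :=
  ∫ z in (0:ℝ)..t, ({z : ℝ | a < f z}.indicator (fun _ => (1:ℝ)) z)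

/-- `A_f^{−1}(t) = inf{s > 0 : A_f(s) > t}` (occupation time of `(a,∞)`). -/
noncomputable def occUpperInv (a : ℝ) (f : ℝ → ℝ) (t : ℝ) : ℝ :=
  sInf {s : ℝ | 0 < s ∧ t < occUpper a f s}

/-- The left fast-forwarding map at level `a`: `N_a^l(f) = f ∘ A_f^{−1}`. -/
noncomputable def ffLeft (a : ℝ) (f : ℝ → ℝ) : ℝ → ℝ := fun t => f (occUpperInv a f t)

/-- `A_f(t) = ∫₀^t 1{f(z) < b} dz`. -/
noncomputable def occLower (b : ℝ) (f : ℝ → ℝ) (t : ℝ) : ℝ :=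
  ∫ z in (0:ℝ)..t, ({z : ℝ | f z < b}.indicator (fun _ => (1:ℝ)) z)

/-- `A_f^{−1}(t) = inf{s > 0 : A_f(s) > t}` (occupation time of `(−∞,b)`). -/
noncomputable def occLowerInv (b : ℝ) (f : ℝ → ℝ) (t : ℝ) : ℝ :=
  sInf {s : ℝ | 0 < s ∧ t < occLower b f s}

/-- The right fast-forwarding map at level `b`: `N_b^r(f) = f ∘ A_f^{−1}`. -/
noncomputable def ffRight (b : ℝ) (f : ℝ → ℝ) : ℝ → ℝ := fun t => f (occLowerInv b f t)

/-- Membership in `D_{a,∞}([0,∞),ℝ)`: the Lebesgue time spent in `(a,∞)` is infinite. -/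
def InfAbove (a : ℝ) (f : ℝ → ℝ) : Prop := volume {t : ℝ | 0 ≤ t ∧ a < f t} = ⊤

/-- Membership in `D_{−∞,b}([0,∞),ℝ)`: the Lebesgue time spent in `(−∞,b)` is infinite. -/
def InfBelow (b : ℝ) (f : ℝ → ℝ) : Prop := volume {t : ℝ | 0 ≤ t ∧ f t < b} = ⊤

/-- Membership in `D_{a,b}([0,∞),ℝ)`: the Lebesgue time spent in `(a,b)` is infinite. -/
def InfBetween (a b : ℝ) (f : ℝ → ℝ) : Prop :=
  volume {t : ℝ | 0 ≤ t ∧ f t ∈ Ioo a b} = ⊤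

/-- Condition (Nl): whenever `f ≥ a+ε` on `[t1,t2) ∪ [t3,t4)` and `f ≤ a` on `[t2,t3)`,
the supremum of `f` over `[t2,t3)` is strictly below `a`. -/
def CondNl (a : ℝ) (f : ℝ → ℝ) : Prop :=
  ∀ ε : ℝ, 0 < ε → ∀ t1 t2 t3 t4 : ℝ, t1 < t2 → t2 < t3 → t3 < t4 →
    (∀ t ∈ Ico t1 t2, a + ε ≤ f t) → (∀ t ∈ Ico t3 t4, a + ε ≤ f t) →
    (∀ t ∈ Ico t2 t3, f t ≤ a) →
    ∃ c : ℝ, c < a ∧ ∀ t ∈ Ico t2 t3, f t ≤ c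

/-- Condition (Nr): whenever `f ≤ b−ε` on `[t1,t2) ∪ [t3,t4)` and `f ≥ b` on `[t2,t3)`,
the infimum of `f` over `[t2,t3)` is strictly above `b`. -/
def CondNr (b : ℝ) (f : ℝ → ℝ) : Prop :=
  ∀ ε : ℝ, 0 < ε → ∀ t1 t2 t3 t4 : ℝ, t1 < t2 → t2 < t3 → t3 < t4 →
    (∀ t ∈ Ico t1 t2, f t ≤ b - ε) → (∀ t ∈ Ico t3 t4, f t ≤ b - ε) →
    (∀ t ∈ Ico t2 t3, b ≤ f t) →
    ∃ c : ℝ, b < c ∧ ∀ t ∈ Ico t2 t3, c ≤ f t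

/-- The space `D([0,∞),ℝ)` of càdlàg paths. -/
def Dfun : Type := {f : ℝ → ℝ // IsCadlag f}

/-- The Skorokhod `J1` topology on `D([0,∞),ℝ)`, generated by the open balls of the
Skorokhod metric `dJ1`. -/
noncomputable def J1Top : TopologicalSpace Dfun :=
  TopologicalSpace.generateFrom
    {s : Set Dfun | ∃ f : Dfun, ∃ ε : ℝ, 0 < ε ∧ s = {g : Dfun | dJ1 f.1 g.1 < ε}}

/-- The Borel σ-algebra of the Skorokhod `J1` topology on `D([0,∞),ℝ)`. -/
noncomputable def J1Borel : MeasurableSpace Dfun := @borel Dfun J1Top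

/-!
A map into the space of càdlàg paths is Borel measurable as soon as its evaluations are. Indeed a
càdlàg `f` oscillates little on the pieces of a finite partition of `[0, T]`; moving these pieces
onto the grid `N⁻¹ ℕ` shows that `f` is the limit, in the Skorokhod metric, of the step paths that
sample it on the grid, and such a step path depends continuously on the sequence of its values.
Evaluations are themselves Borel: by right-continuity `f t` is recovered from the suprema of `f`
over the intervals `(t, t + 1/n)`, and these are lower semicontinuous in `f`.

It remains to evaluate `f` at the time `A_f⁻¹ t`, which depends on `f`. By right-continuity
`(f, s) ↦ f s` is jointly measurable, so that `A_f s`, the measure of a section, is measurable in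
`f`, and with it the right-continuous inverse of `A_f`. Finally `f ∘ A_f⁻¹` is càdlàg because
`A_f⁻¹` is right-continuous and, `A_f` being continuous, strictly increasing, so that it approaches
its left limits from below.
-/

theorem exists_orderIso_eqOn_Iic_eqOn_Ici {α β : Type*} [LinearOrder α] [LinearOrder β]
    (e₁ e₂ : α ≃o β) {a : α} (h : e₁ a = e₂ a) :
    ∃ e : α ≃o β, EqOn e e₁ (Iic a) ∧ EqOn e e₂ (Ici a) := by
  classical
  set E : α → β := (Iic a).piecewise e₁ e₂
  have hle : EqOn E e₁ (Iic a) := piecewise_eqOn _ _ _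
  have hge : EqOn E e₂ (Ici a) := by
    intro t ht
    rcases (mem_Ici.1 ht).eq_or_lt with rfl | hlt
    · rw [hle self_mem_Iic, h]
    · exact piecewise_eq_of_notMem _ _ _ hlt.not_ge
  have hmono : StrictMono E :=
    StrictMonoOn.Iic_union_Ici ((e₁.strictMono.strictMonoOn _).congr hle.symm)
      ((e₂.strictMono.strictMonoOn _).congr hge.symm)
  have hsurj : Function.Surjective E := by
    intro y
    rcases le_total y (e₁ a) with hy | hy
    · exact ⟨e₁.symm y, by rw [hle (e₁.symm_apply_le.2 hy), e₁.apply_symm_apply]⟩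
    · exact ⟨e₂.symm y, by rw [hge (e₂.le_symm_apply.2 (h ▸ hy)), e₂.apply_symm_apply]⟩
  exact ⟨hmono.orderIsoOfSurjective E hsurj, hle, hge⟩

theorem exists_orderIso_affine {K : Type*} [Field K] [LinearOrder K] [IsStrictOrderedRing K]
    {s s' u u' : K} (hs : s < s') (hu : u < u') :
    ∃ e : K ≃o K, ∀ θ : K, e (s + θ * (s' - s)) = u + θ * (u' - u) := by
  have hs' : 0 < s' - s := sub_pos.2 hs
  refine ⟨(OrderIso.addRight (-s)).trans
    ((OrderIso.mulRight₀ ((u' - u) / (s' - s)) (div_pos (sub_pos.2 hu) hs')).trans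
      (OrderIso.addRight u)), fun θ => ?_⟩
  simp only [OrderIso.trans_apply, OrderIso.addRight_apply, OrderIso.mulRight₀_apply]
  field_simp
  ring

theorem IsTimeChange.exists_orderIso {T : ℝ} {γ : ℝ → ℝ} (hT : 0 ≤ T) (hγ : IsTimeChange T γ) :
    ∃ e : ℝ ≃o ℝ, EqOn e γ (Icc 0 T) := by
  classical
  obtain ⟨hcont, hmono, hzero, hend⟩ := hγ
  set E : ℝ → ℝ := (Icc 0 T).piecewise γ id
  have hIcc : EqOn E γ (Icc 0 T) := piecewise_eqOn _ _ _
  have hIic : EqOn E id (Iic 0) := by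
    intro t ht
    rcases (mem_Iic.1 ht).eq_or_lt with rfl | hlt
    · rw [hIcc ⟨le_rfl, hT⟩, hzero, id]
    · exact piecewise_eq_of_notMem _ _ _ fun h => hlt.not_ge h.1
  have hIci : EqOn E id (Ici T) := by
    intro t ht
    rcases (mem_Ici.1 ht).eq_or_lt with rfl | hlt
    · rw [hIcc ⟨hT, le_rfl⟩, hend, id]
    · exact piecewise_eq_of_notMem _ _ _ fun h => hlt.not_ge h.2
  have hE : StrictMono E := by
    refine StrictMonoOn.Iic_union_Ici (a := 0) ((strictMono_id.strictMonoOn _).congr hIic.symm) ?_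
    rw [← Icc_union_Ici_eq_Ici hT]
    exact (hmono.congr hIcc.symm).union ((strictMono_id.strictMonoOn _).congr hIci.symm)
      (isGreatest_Icc hT) isLeast_Ici
  have hsurj : Function.Surjective E := by
    intro y
    rcases le_total y 0 with hy | hy
    · exact ⟨y, hIic hy⟩
    rcases le_total T y with hy' | hy'
    · exact ⟨y, hIci hy'⟩
    · obtain ⟨t, ht, rfl⟩ := intermediate_value_Icc hT hcont
        (show y ∈ Icc (γ 0) (γ T) by rw [hzero, hend]; exact ⟨hy, hy'⟩)
      exact ⟨t, hIcc ht⟩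
  exact ⟨hE.orderIsoOfSurjective E hsurj, hIcc⟩

/-- `e` witnesses that `f` and `g` are within `r` of each other on `[0,T]` in the sense of
Skorokhod: it moves no time, and no value after reparametrization, by more than `r`. Time changes
are encoded as order isomorphisms of the whole line so that they can be inverted and composed. -/
structure IsMatching (T r : ℝ) (f g : ℝ → ℝ) (e : ℝ ≃o ℝ) : Prop where
  map_zero : e 0 = 0
  map_end : e T = T
  abs_sub_le : ∀ t ∈ Icc 0 T, |e t - t| ≤ r
  abs_comp_sub_le : ∀ t ∈ Icc 0 T, |f (e t) - g t| ≤ r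

namespace IsMatching

variable {T r r' : ℝ} {f g h : ℝ → ℝ} {e e' : ℝ ≃o ℝ}

theorem mapsTo (hm : IsMatching T r f g e) : MapsTo e (Icc 0 T) (Icc 0 T) := fun _ ht =>
  ⟨hm.map_zero.symm.trans_le (e.monotone ht.1), (e.monotone ht.2).trans_eq hm.map_end⟩

theorem isTimeChange (hm : IsMatching T r f g e) : IsTimeChange T e :=
  ⟨e.continuous.continuousOn, e.strictMono.strictMonoOn _, hm.map_zero, hm.map_end⟩

theorem refl (hr : 0 ≤ r) (h : ∀ t ∈ Icc 0 T, |f t - g t| ≤ r) :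
    IsMatching T r f g (OrderIso.refl ℝ) :=
  ⟨rfl, rfl, fun _ _ => by simpa using hr, h⟩

theorem symm (hm : IsMatching T r f g e) : IsMatching T r g f e.symm := by
  have hzero : e.symm 0 = 0 := by rw [e.symm_apply_eq, hm.map_zero]
  have hend : e.symm T = T := by rw [e.symm_apply_eq, hm.map_end]
  have hmaps : MapsTo e.symm (Icc 0 T) (Icc 0 T) := fun t ht =>
    ⟨hzero.symm.trans_le (e.symm.monotone ht.1), (e.symm.monotone ht.2).trans_eq hend⟩
  refine ⟨hzero, hend, fun t ht => ?_, fun t ht => ?_⟩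
  · simpa [abs_sub_comm] using hm.abs_sub_le _ (hmaps ht)
  · simpa [abs_sub_comm] using hm.abs_comp_sub_le _ (hmaps ht)

theorem trans (hm : IsMatching T r f g e) (hm' : IsMatching T r' g h e') :
    IsMatching T (r + r') f h (e'.trans e) where
  map_zero := by simp [hm.map_zero, hm'.map_zero]
  map_end := by simp [hm.map_end, hm'.map_end]
  abs_sub_le t ht := (_root_.abs_sub_le _ (e' t) _).trans
    (add_le_add (hm.abs_sub_le _ (hm'.mapsTo ht)) (hm'.abs_sub_le t ht))
  abs_comp_sub_le t ht := (_root_.abs_sub_le _ (g (e' t)) _).trans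
    (add_le_add (hm.abs_comp_sub_le _ (hm'.mapsTo ht)) (hm'.abs_comp_sub_le t ht))

theorem dJ1T_le (hm : IsMatching T r f g e) (hr : 0 ≤ r) : dJ1T T f g ≤ r :=
  csInf_le ⟨0, fun _ h => h.1⟩ ⟨hr, e, hm.isTimeChange, hm.abs_sub_le, hm.abs_comp_sub_le⟩

end IsMatching

section FiniteHorizon

variable {T : ℝ} {f g h : ℝ → ℝ}

theorem dJ1T_nonneg (T : ℝ) (f g : ℝ → ℝ) : 0 ≤ dJ1T T f g :=
  Real.sInf_nonneg fun _ hr => hr.1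

theorem dJ1T_self (T : ℝ) (f : ℝ → ℝ) : dJ1T T f f = 0 :=
  le_antisymm ((IsMatching.refl le_rfl (by simp)).dJ1T_le le_rfl) (dJ1T_nonneg _ _ _)

theorem exists_isMatching_of_dJ1T_lt (hT : 0 ≤ T) (hf : Bornology.IsBounded (f '' Icc 0 T))
    (hg : Bornology.IsBounded (g '' Icc 0 T)) {r : ℝ} (hr : dJ1T T f g < r) :
    ∃ e, IsMatching T r f g e := by
  obtain ⟨C, hC⟩ := hf.exists_norm_le
  obtain ⟨D, hD⟩ := hg.exists_norm_le
  simp only [forall_mem_image, Real.norm_eq_abs] at hC hD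
  have hbound : ∀ t ∈ Icc 0 T, |f t - g t| ≤ C + D := fun t ht =>
    (abs_sub _ _).trans (add_le_add (hC ht) (hD ht))
  have hCD : 0 ≤ C + D := (abs_nonneg _).trans (hbound 0 ⟨le_rfl, hT⟩)
  have hid : IsMatching T (C + D) f g (OrderIso.refl ℝ) := .refl hCD hbound
  rw [dJ1T] at hr
  obtain ⟨r', ⟨-, γ, hγ, htime, hvalue⟩, hr'⟩ := exists_lt_of_csInf_lt
    (by exact ⟨C + D, hCD, _, hid.isTimeChange, hid.abs_sub_le, hid.abs_comp_sub_le⟩) hr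
  obtain ⟨e, he⟩ := hγ.exists_orderIso hT
  refine ⟨e, ?_, ?_, fun t ht => ?_, fun t ht => ?_⟩
  · rw [he ⟨le_rfl, hT⟩, hγ.2.2.1]
  · rw [he ⟨hT, le_rfl⟩, hγ.2.2.2]
  · rw [he ht]
    exact (htime t ht).trans hr'.le
  · rw [he ht]
    exact (hvalue t ht).trans hr'.le

theorem dJ1T_comm (hT : 0 ≤ T) (hf : Bornology.IsBounded (f '' Icc 0 T))
    (hg : Bornology.IsBounded (g '' Icc 0 T)) : dJ1T T f g = dJ1T T g f := by
  have key : ∀ {f g : ℝ → ℝ}, Bornology.IsBounded (f '' Icc 0 T) →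
      Bornology.IsBounded (g '' Icc 0 T) → dJ1T T g f ≤ dJ1T T f g := fun hf hg =>
    le_of_forall_gt_imp_ge_of_dense fun r hr =>
      let ⟨_, he⟩ := exists_isMatching_of_dJ1T_lt hT hf hg hr
      he.symm.dJ1T_le ((dJ1T_nonneg _ _ _).trans hr.le)
  exact (key hg hf).antisymm (key hf hg)

theorem dJ1T_triangle (hT : 0 ≤ T) (hf : Bornology.IsBounded (f '' Icc 0 T))
    (hg : Bornology.IsBounded (g '' Icc 0 T)) (hh : Bornology.IsBounded (h '' Icc 0 T)) :
    dJ1T T f h ≤ dJ1T T f g + dJ1T T g h := by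
  refine le_of_forall_pos_le_add fun ε hε => ?_
  obtain ⟨e, he⟩ := exists_isMatching_of_dJ1T_lt hT hf hg (lt_add_of_pos_right _ (half_pos hε))
  obtain ⟨e', he'⟩ := exists_isMatching_of_dJ1T_lt hT hg hh (lt_add_of_pos_right _ (half_pos hε))
  have hfg := dJ1T_nonneg T f g
  have hgh := dJ1T_nonneg T g h
  exact ((he.trans he').dJ1T_le (by linarith)).trans_eq (by ring)

end FiniteHorizon

/-- The oscillation of `f` over `s` is at most `δ`. -/
def OscLE (f : ℝ → ℝ) (s : Set ℝ) (δ : ℝ) : Prop :=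
  ∀ x ∈ s, ∀ y ∈ s, |f x - f y| ≤ δ

theorem OscLE.mono {f : ℝ → ℝ} {s t : Set ℝ} {δ : ℝ} (h : OscLE f t δ) (hst : s ⊆ t) :
    OscLE f s δ := fun x hx y hy => h x (hst hx) y (hst hy)

theorem exists_mem_oscLE_of_tendsto {f : ℝ → ℝ} {l : Filter ℝ} {L δ : ℝ}
    (h : Tendsto f l (𝓝 L)) (hδ : 0 < δ) : ∃ s ∈ l, OscLE f s δ := by
  refine ⟨f ⁻¹' Metric.ball L (δ / 2), h (Metric.ball_mem_nhds L (half_pos hδ)),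
    fun x hx y hy => ?_⟩
  rw [mem_preimage, Metric.mem_ball] at hx hy
  rw [← Real.dist_eq]
  linarith [dist_triangle_right (f x) (f y) L]

namespace IsCadlag

variable {f : ℝ → ℝ} {δ : ℝ}

theorem exists_oscLE_Ico_right (hf : IsCadlag f) (hδ : 0 < δ) {t : ℝ} (ht : 0 ≤ t) :
    ∃ u > t, OscLE f (Ico t u) δ := by
  obtain ⟨s, hs, hosc⟩ := exists_mem_oscLE_of_tendsto (hf.1 t ht) hδ
  obtain ⟨u, hu, hsub⟩ := mem_nhdsGE_iff_exists_Ico_subset.1 hs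
  exact ⟨u, hu, hosc.mono hsub⟩

theorem exists_oscLE_Ico_left (hf : IsCadlag f) (hδ : 0 < δ) {t : ℝ} (ht : 0 < t) :
    ∃ l < t, OscLE f (Ico l t) δ := by
  obtain ⟨L, hL⟩ := hf.2 t ht
  obtain ⟨s, hs, hosc⟩ := exists_mem_oscLE_of_tendsto hL hδ
  obtain ⟨l, hl, hsub⟩ := mem_nhdsLT_iff_exists_Ico_subset.1 hs
  exact ⟨l, hl, hosc.mono hsub⟩

/-- The supremum of the times reached is itself reached because `f` has a left limit there, and can
be passed because `f` is right-continuous there. -/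
theorem induction_oscLE (hf : IsCadlag f) (hδ : 0 < δ) {P : ℝ → Prop} (zero : P 0)
    (step : ∀ s t, 0 ≤ s → s < t → OscLE f (Ico s t) δ → P s → P t) {T : ℝ} (hT : 0 ≤ T) :
    P T := by
  set S : Set ℝ := {t | t ∈ Icc 0 T ∧ P t}
  have hzero : (0 : ℝ) ∈ S := ⟨⟨le_rfl, hT⟩, zero⟩
  have hbdd : BddAbove S := ⟨T, fun t ht => ht.1.2⟩
  set c := sSup S
  have hc : 0 ≤ c := le_csSup hbdd hzero
  have hPc : P c := by
    rcases hc.eq_or_lt with h | h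
    · rwa [← h]
    · obtain ⟨l, hl, hosc⟩ := hf.exists_oscLE_Ico_left hδ h
      obtain ⟨s, hs, hls⟩ := exists_lt_of_lt_csSup ⟨0, hzero⟩ hl
      rcases (le_csSup hbdd hs).eq_or_lt with hsc | hsc
      · exact (show s = c from hsc) ▸ hs.2
      · exact step s c hs.1.1 hsc (hosc.mono (Ico_subset_Ico_left hls.le)) hs.2
  rcases (csSup_le ⟨0, hzero⟩ fun t ht => ht.1.2 : c ≤ T).eq_or_lt with h | h
  · rwa [← h]
  · obtain ⟨u, hu, hosc⟩ := hf.exists_oscLE_Ico_right hδ hc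
    have hcu : c < min u T := lt_min hu h
    have hmem : min u T ∈ S := ⟨⟨hc.trans hcu.le, min_le_right _ _⟩,
      step c _ hc hcu (hosc.mono (Ico_subset_Ico_right (min_le_left _ _))) hPc⟩
    exact absurd (le_csSup hbdd hmem) hcu.not_ge

theorem isBounded_image_Icc (hf : IsCadlag f) (T : ℝ) : Bornology.IsBounded (f '' Icc 0 T) := by
  rcases lt_or_ge T 0 with hT | hT
  · simp [Icc_eq_empty hT.not_ge]
  refine hf.induction_oscLE (P := fun T => Bornology.IsBounded (f '' Icc 0 T)) one_pos (by simp)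
    (fun s t hs hst hosc hbdd => ?_) hT
  have hIco : Bornology.IsBounded (f '' Ico s t) :=
    Metric.isBounded_iff.2 ⟨1, by simpa only [forall_mem_image, Real.dist_eq] using! hosc⟩
  rw [← Icc_union_Icc_eq_Icc hs hst.le, ← Ico_union_right hst.le, image_union, image_union,
    image_singleton]
  exact hbdd.union (hIco.union Bornology.isBounded_singleton)

end IsCadlag

theorem restrictD_eq_min_mul (T : ℝ) (f : ℝ → ℝ) (t : ℝ) :
    restrictD T f t = min 1 (T - t) * f t := by
  rw [restrictD]
  split_ifs with h
  · rw [min_eq_left (by linarith), one_mul]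
  · rw [min_eq_right (by linarith)]

theorem abs_min_one_sub_le_one {T t : ℝ} (ht : t ≤ T) : |min 1 (T - t)| ≤ 1 :=
  (abs_of_nonneg (le_min zero_le_one (sub_nonneg.2 ht))).trans_le (min_le_left _ _)

theorem IsCadlag.isBounded_image_restrictD {f : ℝ → ℝ} (hf : IsCadlag f) (T : ℝ) :
    Bornology.IsBounded (restrictD T f '' Icc 0 T) := by
  obtain ⟨C, hC⟩ := (hf.isBounded_image_Icc T).exists_norm_le
  refine isBounded_iff_forall_norm_le.2 ⟨C, forall_mem_image.2 fun t ht => ?_⟩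
  rw [restrictD_eq_min_mul, norm_mul]
  exact (mul_le_of_le_one_left (norm_nonneg _) (abs_min_one_sub_le_one ht.2)).trans
    (hC _ (mem_image_of_mem f ht))

theorem min_add_le_min_add_min {α : Type*} [AddCommGroup α] [LinearOrder α] [IsOrderedAddMonoid α]
    {c x y : α} (hc : 0 ≤ c) (hx : 0 ≤ x) (hy : 0 ≤ y) : min c (x + y) ≤ min c x + min c y := by
  rcases le_total c x with h | h
  · rw [min_eq_left h]
    exact (min_le_left _ _).trans (le_add_of_nonneg_right (le_min hc hy))
  rcases le_total c y with h' | h'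
  · rw [min_eq_left h']
    exact (min_le_left _ _).trans (le_add_of_nonneg_left (le_min hc hx))
  · rw [min_eq_right h, min_eq_right h']
    exact min_le_right _ _

/-- The factor of weight `2^{-(m+1)}` in the series `dJ1`. The index is shifted by one with respect
to the paper, so this one compares the paths on `[0, m + 1]`. -/
def dJ1Trunc (m : ℕ) (f g : ℝ → ℝ) : ℝ :=
  min 1 (dJ1T (m + 1) (restrictD (m + 1) f) (restrictD (m + 1) g))

section Metric

variable {f g h : ℝ → ℝ}

theorem dJ1Trunc_nonneg (m : ℕ) (f g : ℝ → ℝ) : 0 ≤ dJ1Trunc m f g :=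
  le_min zero_le_one (dJ1T_nonneg _ _ _)

theorem dJ1Trunc_le_one (m : ℕ) (f g : ℝ → ℝ) : dJ1Trunc m f g ≤ 1 :=
  min_le_left _ _

theorem dJ1Trunc_comm (m : ℕ) (hf : IsCadlag f) (hg : IsCadlag g) :
    dJ1Trunc m f g = dJ1Trunc m g f := by
  rw [dJ1Trunc, dJ1T_comm (by positivity) (hf.isBounded_image_restrictD _)
    (hg.isBounded_image_restrictD _), dJ1Trunc]

theorem dJ1Trunc_triangle (m : ℕ) (hf : IsCadlag f) (hg : IsCadlag g) (hh : IsCadlag h) :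
    dJ1Trunc m f h ≤ dJ1Trunc m f g + dJ1Trunc m g h :=
  (min_le_min_left _ (dJ1T_triangle (by positivity) (hf.isBounded_image_restrictD _)
    (hg.isBounded_image_restrictD _) (hh.isBounded_image_restrictD _))).trans
    (min_add_le_min_add_min zero_le_one (dJ1T_nonneg _ _ _) (dJ1T_nonneg _ _ _))

theorem dJ1_eq_tsum (f g : ℝ → ℝ) : dJ1 f g = ∑' m : ℕ, 2⁻¹ ^ (m + 1) * dJ1Trunc m f g :=
  rfl

theorem summable_half_pow_succ : Summable fun m : ℕ => (2⁻¹ : ℝ) ^ (m + 1) :=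
  (summable_nat_add_iff 1).2 (summable_geometric_of_lt_one (by norm_num) (by norm_num))

theorem summable_dJ1 (f g : ℝ → ℝ) :
    Summable fun m : ℕ => (2⁻¹ : ℝ) ^ (m + 1) * dJ1Trunc m f g :=
  summable_half_pow_succ.of_nonneg_of_le
    (fun m => mul_nonneg (by positivity) (dJ1Trunc_nonneg m f g))
    (fun m => mul_le_of_le_one_right (by positivity) (dJ1Trunc_le_one m f g))

theorem half_pow_succ_mul_dJ1Trunc_le_dJ1 (m : ℕ) (f g : ℝ → ℝ) :
    2⁻¹ ^ (m + 1) * dJ1Trunc m f g ≤ dJ1 f g :=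
  (summable_dJ1 f g).le_tsum m fun k _ => mul_nonneg (by positivity) (dJ1Trunc_nonneg k f g)

theorem dJ1_self (f : ℝ → ℝ) : dJ1 f f = 0 := by
  simp [dJ1, dJ1T_self]

theorem dJ1_comm (hf : IsCadlag f) (hg : IsCadlag g) : dJ1 f g = dJ1 g f :=
  tsum_congr fun m => congrArg _ (dJ1Trunc_comm m hf hg)

theorem dJ1_triangle (hf : IsCadlag f) (hg : IsCadlag g) (hh : IsCadlag h) :
    dJ1 f h ≤ dJ1 f g + dJ1 g h := by
  refine ((summable_dJ1 f h).tsum_le_tsum (fun m => ?_)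
    ((summable_dJ1 f g).add (summable_dJ1 g h))).trans_eq
    ((summable_dJ1 f g).tsum_add (summable_dJ1 g h))
  rw [← mul_add]
  exact mul_le_mul_of_nonneg_left (dJ1Trunc_triangle m hf hg hh) (by positivity)

end Metric

/-- `dJ1` as a pseudometric on the space of càdlàg paths; separation of points is not recorded, as
the Borel σ-algebra does not depend on it. -/
abbrev j1PseudoMetricSpace : PseudoMetricSpace Dfun where
  dist f g := dJ1 f.1 g.1
  dist_self f := dJ1_self f.1
  dist_comm f g := dJ1_comm f.2 g.2
  dist_triangle f g h := dJ1_triangle f.2 g.2 h.2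

theorem J1Top_eq_toTopologicalSpace :
    J1Top = j1PseudoMetricSpace.toUniformSpace.toTopologicalSpace := by
  let := j1PseudoMetricSpace
  have hball (f : Dfun) (ε : ℝ) : {g : Dfun | dJ1 f.1 g.1 < ε} = Metric.ball f ε :=
    Set.ext fun g => by rw [Metric.mem_ball']; rfl
  refine (TopologicalSpace.IsTopologicalBasis.eq_generateFrom ?_).symm
  refine TopologicalSpace.isTopologicalBasis_of_isOpen_of_nhds ?_ fun f u hf hu => ?_
  · rintro _ ⟨f, ε, -, rfl⟩
    rw [hball]
    exact Metric.isOpen_ball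
  · obtain ⟨ε, hε, hsub⟩ := Metric.isOpen_iff.1 hu f hf
    exact ⟨Metric.ball f ε, ⟨f, ε, hε, (hball f ε).symm⟩, Metric.mem_ball_self hε, hsub⟩

instance : TopologicalSpace Dfun := J1Top

instance : PseudoMetricSpace Dfun :=
  j1PseudoMetricSpace.replaceTopology J1Top_eq_toTopologicalSpace

instance : MeasurableSpace Dfun := J1Borel

instance : BorelSpace Dfun := ⟨rfl⟩

theorem restrictD_of_le {T t : ℝ} (f : ℝ → ℝ) (ht : t ≤ T) : restrictD (T + 1) f t = f t :=
  if_pos (by linarith)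

theorem exists_isMatching_of_dJ1_lt {f g : ℝ → ℝ} (hf : IsCadlag f) (hg : IsCadlag g) {m : ℕ}
    {r : ℝ} (hr : r ≤ 1) (h : dJ1 f g < 2⁻¹ ^ (m + 1) * r) :
    ∃ e, IsMatching (m + 1) r (restrictD (m + 1) f) (restrictD (m + 1) g) e := by
  have htrunc : dJ1Trunc m f g < r := lt_of_mul_lt_mul_left
    ((half_pow_succ_mul_dJ1Trunc_le_dJ1 m f g).trans_lt h) (by positivity)
  exact exists_isMatching_of_dJ1T_lt (by positivity) (hf.isBounded_image_restrictD _)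
    (hg.isBounded_image_restrictD _) ((min_lt_iff.1 htrunc).resolve_left hr.not_gt)

theorem isOpen_exists_lt_apply {p : ℝ} (hp : 0 ≤ p) (q c : ℝ) :
    IsOpen {f : Dfun | ∃ s ∈ Ioo p q, c < f.1 s} := by
  refine Metric.isOpen_iff.2 fun f ⟨s, hs, hcs⟩ => ?_
  obtain ⟨r, hr, hr'⟩ := exists_between
    (show 0 < min 1 (min (s - p) (min (q - s) (f.1 s - c))) by
      simp only [lt_min_iff, sub_pos]
      exact ⟨one_pos, hs.1, hs.2, hcs⟩)
  simp only [lt_min_iff] at hr'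
  obtain ⟨hr1, hrp, hrq, hrc⟩ := hr'
  obtain ⟨m, hm⟩ := exists_nat_ge (s + 1)
  refine ⟨2⁻¹ ^ (m + 1) * r, by positivity, fun g hg => ?_⟩
  obtain ⟨e, he⟩ := exists_isMatching_of_dJ1_lt g.2 f.2 hr1.le (Metric.mem_ball.1 hg)
  have hs' : s ∈ Icc (0 : ℝ) (m + 1) := ⟨hp.trans hs.1.le, by linarith⟩
  have htime := abs_le.1 (he.abs_sub_le s hs')
  have hvalue := he.abs_comp_sub_le s hs'
  rw [restrictD_of_le _ (by linarith), restrictD_of_le _ (by linarith), abs_le] at hvalue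
  exact ⟨e s, ⟨by linarith, by linarith⟩, by linarith⟩

theorem IsCadlag.le_apply_iff {f : ℝ → ℝ} (hf : IsCadlag f) {t : ℝ} (ht : 0 ≤ t) {c : ℝ} :
    c ≤ f t ↔ ∀ q : ℚ, q < c → ∀ n : ℕ, ∃ s ∈ Ioo t (t + 1 / (n + 1)), q < f s := by
  have hlim : Tendsto f (𝓝[>] t) (𝓝 (f t)) :=
    (hf.1 t ht).mono_left (nhdsWithin_mono t Ioi_subset_Ici_self)
  constructor
  · intro hc q hq n
    exact nonempty_of_mem (inter_mem (Ioo_mem_nhdsGT (lt_add_of_pos_right t Nat.one_div_pos_of_nat))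
      (hlim.eventually_const_lt (hq.trans_le hc)))
  · contrapose!
    intro hc
    obtain ⟨q, hfq, hqc⟩ := exists_rat_btwn hc
    obtain ⟨u, hu, hsub⟩ := mem_nhdsGT_iff_exists_Ioo_subset.1 (hlim.eventually_lt_const hfq)
    obtain ⟨n, hn⟩ := exists_nat_one_div_lt (sub_pos.2 (mem_Ioi.1 hu))
    exact ⟨q, hqc, n, fun s hs => (hsub ⟨hs.1, hs.2.trans (by linarith)⟩ : f s < q).le⟩

theorem measurable_eval {t : ℝ} (ht : 0 ≤ t) : Measurable fun f : Dfun => f.1 t := by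
  refine measurable_of_Ici fun c => ?_
  have hset : (fun f : Dfun => f.1 t) ⁻¹' Ici c = ⋂ (q : ℚ) (_ : q < c) (n : ℕ),
      {f : Dfun | ∃ s ∈ Ioo t (t + 1 / (n + 1)), q < f.1 s} := by
    ext f
    simpa using f.2.le_apply_iff ht
  rw [hset]
  exact .iInter fun q => .iInter fun _ => .iInter fun n =>
    (isOpen_exists_lt_apply ht _ _).measurableSet

theorem IsMatching.restrict {T r C : ℝ} {f g : ℝ → ℝ} {e : ℝ ≃o ℝ} (hm : IsMatching T r f g e)
    (hC : ∀ t ∈ Icc 0 T, |f t| ≤ C) :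
    IsMatching T (r * (1 + C)) (restrictD T f) (restrictD T g) e := by
  refine ⟨hm.map_zero, hm.map_end, fun t ht => ?_, fun t ht => ?_⟩
  · have hr := hm.abs_sub_le t ht
    exact hr.trans (le_mul_of_one_le_right ((abs_nonneg _).trans hr)
      (le_add_of_nonneg_right ((abs_nonneg _).trans (hC t ht))))
  · have hcutoff : |min 1 (T - e t) - min 1 (T - t)| ≤ r :=
      (abs_min_sub_min_le_max 1 (T - e t) 1 (T - t)).trans (by
        simpa [abs_sub_comm t] using hm.abs_sub_le t ht)
    calc |restrictD T f (e t) - restrictD T g t|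
        = |(min 1 (T - e t) - min 1 (T - t)) * f (e t) + min 1 (T - t) * (f (e t) - g t)| := by
          rw [restrictD_eq_min_mul, restrictD_eq_min_mul]
          ring_nf
      _ ≤ |min 1 (T - e t) - min 1 (T - t)| * |f (e t)| + |min 1 (T - t)| * |f (e t) - g t| := by
          rw [← abs_mul, ← abs_mul]
          exact abs_add_le _ _
      _ ≤ r * C + 1 * r := by
          gcongr
          · exact (abs_nonneg _).trans hcutoff
          · exact hC _ (hm.mapsTo ht)
          · exact abs_min_one_sub_le_one ht.2
          · exact hm.abs_comp_sub_le t ht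
      _ = r * (1 + C) := by ring

theorem tendsto_of_isMatching {ι : Type*} {l : Filter ι} {F : ι → Dfun} {f : Dfun}
    (h : ∀ m : ℕ, ∀ ε > 0, ∀ᶠ i in l, ∃ e, IsMatching (m + 1) ε f.1 (F i).1 e) :
    Tendsto F l (𝓝 f) := by
  have htrunc (m : ℕ) : Tendsto (fun i => dJ1Trunc m f.1 (F i).1) l (𝓝 0) := by
    obtain ⟨C, hC⟩ := (f.2.isBounded_image_Icc (m + 1)).exists_norm_le
    simp only [forall_mem_image, Real.norm_eq_abs] at hC
    have hC0 : 0 ≤ C := (abs_nonneg _).trans (hC ⟨le_rfl, by positivity⟩)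
    refine Metric.tendsto_nhds.2 fun ε hε => ?_
    filter_upwards [h m (ε / 2 / (1 + C)) (by positivity)] with i ⟨e, he⟩
    have hdist := (he.restrict fun t ht => hC ht).dJ1T_le (by positivity)
    rw [div_mul_cancel₀ _ (by positivity)] at hdist
    rw [Real.dist_0_eq_abs, abs_of_nonneg (dJ1Trunc_nonneg _ _ _)]
    exact (min_le_right _ _).trans_lt (hdist.trans_lt (half_lt_self hε))
  have hsum : Tendsto (fun i => dJ1 f.1 (F i).1) l (𝓝 (∑' m : ℕ, 2⁻¹ ^ (m + 1) * 0)) := by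
    simp only [dJ1_eq_tsum]
    refine tendsto_tsum_of_dominated_convergence summable_half_pow_succ
      (fun m => (htrunc m).const_mul _) (.of_forall fun i m => ?_)
    rw [Real.norm_of_nonneg (mul_nonneg (by positivity) (dJ1Trunc_nonneg m _ _))]
    exact mul_le_of_le_one_right (by positivity) (dJ1Trunc_le_one m _ _)
  rw [tendsto_iff_dist_tendsto_zero]
  simpa [dist_comm _ f] using! hsum

theorem tendsto_natFloor_nhdsGE {K : Type*} [Ring K] [LinearOrder K] [FloorRing K]
    [TopologicalSpace K] [OrderClosedTopology K] [IsStrictOrderedRing K] (t : K) :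
    Tendsto (fun x : K => ⌊x⌋₊) (𝓝[≥] t) (pure ⌊t⌋₊) := by
  simpa only [Function.comp_def, Int.floor_toNat] using
    (tendsto_pure_pure Int.toNat ⌊t⌋).comp (tendsto_floor_right_pure_floor t)

theorem isCadlag_comp_natFloor_mul (N : ℕ) (x : ℕ → ℝ) : IsCadlag fun t => x ⌊N * t⌋₊ := by
  have hmono : Monotone fun t : ℝ => (N * t : ℝ) :=
    monotone_id.const_mul N.cast_nonneg
  refine ⟨fun t _ => ?_, fun t _ => ?_⟩
  · have hmul : Tendsto (fun s : ℝ => (N * s : ℝ)) (𝓝[≥] t) (𝓝[≥] (N * t)) :=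
      tendsto_nhdsWithin_iff.2 ⟨((continuous_const_mul _).tendsto t).mono_left inf_le_left,
        eventually_mem_nhdsWithin.mono fun _ hs => hmono hs⟩
    exact (tendsto_pure_nhds x _).comp ((tendsto_natFloor_nhdsGE _).comp hmul)
  · exact ⟨_, (continuous_of_discreteTopology.tendsto _).comp
      ((Nat.floor_mono.comp hmono).tendsto_nhdsLT t)⟩

/-- The step path that takes the value `x k` on `[k / N, (k + 1) / N)`. -/
def stepPath (N : ℕ) (x : ℕ → ℝ) : Dfun :=
  ⟨fun t => x ⌊N * t⌋₊, isCadlag_comp_natFloor_mul N x⟩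

theorem continuous_stepPath (N : ℕ) : Continuous (stepPath N) := by
  refine continuous_iff_continuousAt.2 fun x => tendsto_of_isMatching fun m ε hε => ?_
  have hclose : ∀ᶠ y in 𝓝 x, ∀ k ∈ Iic (N * (m + 1)), |x k - y k| ≤ ε :=
    (eventually_all_finite (finite_Iic _)).2 fun k _ =>
      (((continuous_apply k).tendsto x).eventually (Metric.closedBall_mem_nhds (x k) hε)).mono
        fun y hy => by rwa [← Real.dist_eq, dist_comm]
  filter_upwards [hclose] with y hy
  refine ⟨_, .refl hε.le fun t ht => hy _ (Nat.floor_le_of_le ?_)⟩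
  push_cast
  exact mul_le_mul_of_nonneg_left ht.2 N.cast_nonneg

/-- On `[0, ⌈N * T⌉₊ / N]`, which is `[0, T]` with its end pushed up to the grid `N⁻¹ ℕ`, the order
isomorphism `e` moves time by at most `1 / N` and turns `f`, up to `δ`, into the step path sampling
`f` on the grid. This is the invariant that is carried along `[0, T]` across the pieces on which `f`
oscillates by at most `δ`. -/
structure IsGridMatching (f : ℝ → ℝ) (δ T : ℝ) (N : ℕ) (e : ℝ ≃o ℝ) : Prop where
  map_zero : e 0 = 0
  map_end : e (⌈N * T⌉₊ / N) = T
  abs_sub_le : ∀ t ∈ Ico 0 (⌈N * T⌉₊ / N : ℝ), |e t - t| ≤ 1 / N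
  abs_comp_sub_le : ∀ t ∈ Ico 0 (⌈N * T⌉₊ / N : ℝ), |f (e t) - f (⌊N * t⌋₊ / N)| ≤ δ

section Grid

variable {N : ℕ} {T : ℝ}

theorem le_natCeil_mul_div (hN : 0 < N) : T ≤ ⌈N * T⌉₊ / N := by
  rw [le_div_iff₀' (by positivity)]
  exact Nat.le_ceil _

theorem natCeil_mul_div_le (hN : 0 < N) (hT : 0 ≤ T) : ⌈N * T⌉₊ / N ≤ T + 1 / N := by
  have h := (Nat.ceil_lt_add_one (by positivity : 0 ≤ N * T)).le
  rw [div_le_iff₀ (by positivity)]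
  field_simp
  linarith

theorem natFloor_mul_div_mem_Ico (hN : 0 < N) {s t : ℝ}
    (ht : t ∈ Ico (⌈N * s⌉₊ / N : ℝ) (⌈N * T⌉₊ / N)) : (⌊N * t⌋₊ / N : ℝ) ∈ Ico s T := by
  have hN' : (0 : ℝ) < N := by exact_mod_cast hN
  rw [mem_Ico, div_le_iff₀' hN', lt_div_iff₀' hN'] at ht
  rw [mem_Ico, le_div_iff₀' hN', div_lt_iff₀' hN']
  have hnonneg : 0 ≤ N * t := (Nat.cast_nonneg _).trans ht.1
  exact ⟨(Nat.le_ceil _).trans (Nat.cast_le.2 (Nat.le_floor ht.1)),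
    Nat.lt_ceil.1 ((Nat.floor_lt hnonneg).2 ht.2)⟩

end Grid

theorem IsGridMatching.exists_step {f : ℝ → ℝ} {δ s T : ℝ} {N : ℕ} {e : ℝ ≃o ℝ}
    (he : IsGridMatching f δ s N e) (hs : 0 ≤ s) (hN : 0 < N) (hsT : s + 1 / N < T)
    (hosc : OscLE f (Ico s T) δ) : ∃ e', IsGridMatching f δ T N e' := by
  set u : ℝ := ⌈N * s⌉₊ / N
  set v : ℝ := ⌈N * T⌉₊ / N
  have hu0 : 0 ≤ u := by positivity
  have hsu : s ≤ u := le_natCeil_mul_div hN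
  have hus : u ≤ s + 1 / N := natCeil_mul_div_le hN hs
  have hTv : T ≤ v := le_natCeil_mul_div hN
  have hvT : v ≤ T + 1 / N := natCeil_mul_div_le hN (by linarith)
  have huv : u < v := by linarith
  have hsT' : s < T := by linarith
  obtain ⟨a, ha⟩ := exists_orderIso_affine huv hsT'
  have hau : a u = s := by simpa using ha 0
  have hav : a v = T := by simpa using ha 1
  obtain ⟨e', hle, hge⟩ := exists_orderIso_eqOn_Iic_eqOn_Ici e a (he.map_end.trans hau.symm)
  refine ⟨e', (hle hu0).trans he.map_zero, (hge huv.le).trans hav, fun t ht => ?_, fun t ht => ?_⟩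
  · rcases lt_or_ge t u with htu | hut
    · rw [hle htu.le]
      exact he.abs_sub_le t ⟨ht.1, htu⟩
    · obtain ⟨θ, rfl⟩ : ∃ θ, t = u + θ * (v - u) :=
        ⟨(t - u) / (v - u), by field_simp [(sub_pos.2 huv).ne']; ring⟩
      have hθ0 : 0 ≤ θ := by nlinarith
      have hθ1 : θ ≤ 1 := by nlinarith [ht.2]
      rw [hge hut, ha, abs_le]
      constructor <;> nlinarith
  · rcases lt_or_ge t u with htu | hut
    · rw [hle htu.le]
      exact he.abs_comp_sub_le t ⟨ht.1, htu⟩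
    · rw [hge hut]
      exact hosc _ ⟨hau.symm.trans_le (a.monotone hut), (a.strictMono ht.2).trans_eq hav⟩ _
        (natFloor_mul_div_mem_Ico hN ⟨hut, ht.2⟩)

theorem IsCadlag.eventually_exists_isGridMatching {f : ℝ → ℝ} (hf : IsCadlag f) {δ T : ℝ}
    (hδ : 0 < δ) (hT : 0 ≤ T) : ∀ᶠ N : ℕ in atTop, ∃ e, IsGridMatching f δ T N e := by
  refine hf.induction_oscLE (P := fun T => ∀ᶠ N : ℕ in atTop, ∃ e, IsGridMatching f δ T N e) hδ
    (.of_forall fun N => ⟨OrderIso.refl ℝ, by simp, by simp, by simp, by simp⟩)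
    (fun s t hs hst hosc h => ?_) hT
  filter_upwards [h, eventually_gt_atTop 0,
    tendsto_one_div_atTop_nhds_zero_nat.eventually_lt_const (sub_pos.2 hst)] with N ⟨e, he⟩ hN hN'
  exact he.exists_step hs hN (by linarith) hosc

theorem IsGridMatching.isMatching_stepPath {f : ℝ → ℝ} {δ : ℝ} {m N : ℕ} {e : ℝ ≃o ℝ}
    (he : IsGridMatching f δ (m + 1) N e) (hδ : 0 ≤ δ) (hN : 0 < N) (hNδ : 1 / N ≤ δ) :
    IsMatching (m + 1) δ f (stepPath N fun k => f (k / N)).1 e := by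
  have hN' : (N : ℝ) ≠ 0 := by positivity
  have hceil : (⌈N * (m + 1 : ℝ)⌉₊ / N : ℝ) = m + 1 := by
    rw [show (N * (m + 1) : ℝ) = (N * (m + 1) : ℕ) by push_cast; rfl, Nat.ceil_natCast]
    push_cast
    field_simp
  have hfloor : (⌊N * (m + 1 : ℝ)⌋₊ / N : ℝ) = m + 1 := by
    rw [show (N * (m + 1) : ℝ) = (N * (m + 1) : ℕ) by push_cast; rfl, Nat.floor_natCast]
    push_cast
    field_simp
  obtain ⟨hzero, hend, htime, hvalue⟩ := he
  rw [hceil] at hend htime hvalue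
  refine ⟨hzero, hend, fun t ht => ?_, fun t ht => ?_⟩ <;>
    rcases ht.2.eq_or_lt with rfl | hlt
  · simpa [hend] using hδ
  · exact (htime t ⟨ht.1, hlt⟩).trans hNδ
  · simpa [stepPath, hend, hfloor] using hδ
  · exact hvalue t ⟨ht.1, hlt⟩

theorem tendsto_stepPath_sample (f : Dfun) :
    Tendsto (fun N : ℕ => stepPath N fun k => f.1 (k / N)) atTop (𝓝 f) := by
  refine tendsto_of_isMatching fun m ε hε => ?_
  filter_upwards [f.2.eventually_exists_isGridMatching hε (by positivity : (0 : ℝ) ≤ m + 1),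
    eventually_gt_atTop 0,
    tendsto_one_div_atTop_nhds_zero_nat.eventually_le_const hε] with N ⟨e, he⟩ hN hNε
  exact ⟨e, he.isMatching_stepPath hε.le hN hNε⟩

theorem measurable_Dfun_iff {Ω : Type*} [MeasurableSpace Ω] {G : Ω → Dfun} :
    Measurable G ↔ ∀ t, 0 ≤ t → Measurable fun ω => (G ω).1 t := by
  refine ⟨fun hG t ht => (measurable_eval ht).comp hG, fun h => ?_⟩
  refine measurable_of_tendsto_metrizable (f := fun N ω => stepPath N fun k => (G ω).1 (k / N))
    (fun N => ?_) (tendsto_pi_nhds.2 fun ω => tendsto_stepPath_sample (G ω))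
  exact (continuous_stepPath N).measurable.comp
    (measurable_pi_lambda _ fun k => h _ (by positivity))

theorem measurable_uncurry_of_continuousWithinAt_Ici {Ω E : Type*} [MeasurableSpace Ω]
    [TopologicalSpace E] [TopologicalSpace.PseudoMetrizableSpace E] [MeasurableSpace E]
    [BorelSpace E] {X : Ω → NNReal → E} (hcont : ∀ ω t, ContinuousWithinAt (X ω) (Ici t) t)
    (hmeas : ∀ t, Measurable fun ω => X ω t) : Measurable (Function.uncurry X) := by
  let gridAbove (n : ℕ) (t : NNReal) : NNReal := (⌊(n + 1) * t⌋₊ + 1) / (n + 1)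
  have hlt (n : ℕ) (t : NNReal) : t < gridAbove n t := by
    rw [lt_div_iff₀' (by positivity)]
    exact Nat.lt_floor_add_one _
  have hle (n : ℕ) (t : NNReal) : gridAbove n t ≤ t + 1 / (n + 1) := by
    rw [div_le_iff₀' (by positivity), mul_add, mul_one_div_cancel (by positivity)]
    gcongr
    exact Nat.floor_le zero_le
  have hlim (t : NNReal) : Tendsto (gridAbove · t) atTop (𝓝[≥] t) := by
    refine tendsto_nhdsWithin_iff.2 ⟨?_, .of_forall fun n => (hlt n t).le⟩
    refine tendsto_of_tendsto_of_tendsto_of_le_of_le tendsto_const_nhds ?_ (fun n => (hlt n t).le)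
      (hle · t)
    simpa using tendsto_const_nhds.add (tendsto_one_div_add_atTop_nhds_zero_nat (𝕜 := NNReal))
  refine measurable_of_tendsto_metrizable
    (f := fun n (p : Ω × NNReal) => X p.1 (gridAbove n p.2)) (fun n => ?_)
    (tendsto_pi_nhds.2 fun p => (hcont p.1 p.2).tendsto.comp (hlim p.2))
  have hgrid : Measurable fun q : Ω × ℕ => X q.1 ((q.2 + 1) / (n + 1)) :=
    measurable_from_prod_countable_left fun k => hmeas ((k + 1) / (n + 1))
  exact hgrid.comp (measurable_fst.prodMk
    (Nat.measurable_floor.comp (measurable_snd.const_mul ((n : NNReal) + 1))))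

theorem measurable_apply_toNNReal : Measurable fun p : Dfun × ℝ => p.1.1 p.2.toNNReal := by
  have hcont (f : Dfun) (t : NNReal) : ContinuousWithinAt (fun t : NNReal => f.1 t) (Ici t) t :=
    (f.2.1 t t.2).comp (tendsto_nhdsWithin_iff.2
      ⟨NNReal.continuous_coe.continuousWithinAt, eventually_mem_nhdsWithin⟩)
  exact (measurable_uncurry_of_continuousWithinAt_Ici hcont fun t => measurable_eval t.2).comp
    (measurable_fst.prodMk measurable_snd.real_toNNReal)

theorem measurableSet_nonneg_lt_apply (a : ℝ) :
    MeasurableSet {p : Dfun × ℝ | 0 ≤ p.2 ∧ a < p.1.1 p.2} := by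
  have hset : {p : Dfun × ℝ | 0 ≤ p.2 ∧ a < p.1.1 p.2} =
      {p | 0 ≤ p.2} ∩ {p | a < p.1.1 p.2.toNNReal} := by
    ext p
    refine and_congr_right fun hp => ?_
    rw [mem_ofPred_eq, Real.coe_toNNReal _ hp]
  rw [hset]
  exact (measurableSet_le measurable_const measurable_snd).inter
    (measurableSet_lt measurable_const measurable_apply_toNNReal)

theorem IsCadlag.measurableSet_nonneg_lt {f : ℝ → ℝ} (hf : IsCadlag f) (a : ℝ) :
    MeasurableSet {t | 0 ≤ t ∧ a < f t} :=
  (measurable_prodMk_left (x := (⟨f, hf⟩ : Dfun))) (measurableSet_nonneg_lt_apply a)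

section Occupation

variable {a : ℝ} {f : ℝ → ℝ} {s : ℝ}

theorem occUpper_eq_integral (hs : 0 ≤ s) :
    occUpper a f s = ∫ z in 0..s, {t | 0 ≤ t ∧ a < f t}.indicator 1 z := by
  refine intervalIntegral.integral_congr fun z hz => ?_
  rw [uIcc_of_le hs] at hz
  simp [indicator_apply, hz.1]

theorem occUpper_eq_measureReal (hf : IsCadlag f) (hs : 0 ≤ s) :
    occUpper a f s = (volume.restrict (Ioc 0 s)).real {t | 0 ≤ t ∧ a < f t} := by
  rw [occUpper_eq_integral hs, intervalIntegral.integral_of_le hs,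
    integral_indicator_one (hf.measurableSet_nonneg_lt a)]

theorem measurable_occUpper (a : ℝ) (hs : 0 ≤ s) : Measurable fun f : Dfun => occUpper a f.1 s := by
  simp only [fun f : Dfun => occUpper_eq_measureReal (a := a) f.2 hs]
  exact (measurable_measure_prodMk_left (measurableSet_nonneg_lt_apply a)).ennreal_toReal

theorem occUpper_zero (a : ℝ) (f : ℝ → ℝ) : occUpper a f 0 = 0 :=
  intervalIntegral.integral_same

theorem monotoneOn_occUpper (hf : IsCadlag f) : MonotoneOn (occUpper a f) (Ici 0) := by
  intro s hs t ht hst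
  rw [occUpper_eq_measureReal hf hs, occUpper_eq_measureReal hf ht]
  exact ENNReal.toReal_mono (measure_ne_top _ _)
    (Measure.restrict_mono (Ioc_subset_Ioc_right hst) le_rfl _)

theorem continuousOn_occUpper (hf : IsCadlag f) : ContinuousOn (occUpper a f) (Ici 0) := by
  have hint (s t : ℝ) :
      IntervalIntegrable ({t | 0 ≤ t ∧ a < f t}.indicator (1 : ℝ → ℝ)) volume s t :=
    ((integrableOn_const (by simp)).indicator (hf.measurableSet_nonneg_lt a)).intervalIntegrable
  exact (intervalIntegral.continuous_primitive hint 0).continuousOn.congr fun s hs =>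
    occUpper_eq_integral hs

theorem exists_lt_occUpper (hf : IsCadlag f) (hinf : InfAbove a f) (t : ℝ) :
    ∃ s, 0 < s ∧ t < occUpper a f s := by
  set S : Set ℝ := {t | 0 ≤ t ∧ a < f t}
  have hunion : ⋃ n : ℕ, Ioc 0 (n : ℝ) = Ioi 0 := by
    ext x
    simpa using fun _ => exists_nat_ge x
  have htop : volume.restrict S (⋃ n : ℕ, Ioc 0 (n : ℝ)) = ⊤ := by
    rw [hunion, measure_congr Ioi_ae_eq_Ici, Measure.restrict_apply measurableSet_Ici,
      inter_eq_right.2 fun _ ht => ht.1]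
    exact hinf
  have hlim : Tendsto (fun n : ℕ => volume.restrict S (Ioc 0 (n : ℝ))) atTop (𝓝 ⊤) :=
    htop ▸ tendsto_measure_iUnion_atTop fun m n hmn => Ioc_subset_Ioc_right (Nat.cast_le.2 hmn)
  obtain ⟨n, hn, hpos⟩ := ((hlim.eventually_const_lt (ENNReal.ofReal_lt_top (r := t))).and
    (eventually_gt_atTop 0)).exists
  refine ⟨n, by positivity, ?_⟩
  rw [Measure.restrict_apply measurableSet_Ioc, inter_comm,
    ← Measure.restrict_apply (hf.measurableSet_nonneg_lt a)] at hn
  rw [occUpper_eq_measureReal hf (by positivity)]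
  exact lt_of_not_ge fun h => hn.not_ge
    ((ENNReal.ofReal_toReal (measure_ne_top _ _)).symm.trans_le (ENNReal.ofReal_le_ofReal h))

end Occupation

/-- The right-continuous inverse of `A` on `[0,∞)`, so that `occUpperInv a f` is
`rightInv (occUpper a f)`. -/
def rightInv (A : ℝ → ℝ) (t : ℝ) : ℝ :=
  sInf {s | 0 < s ∧ t < A s}

section RightInv

variable {A : ℝ → ℝ}

theorem rightInv_nonneg (A : ℝ → ℝ) (t : ℝ) : 0 ≤ rightInv A t :=
  Real.sInf_nonneg fun _ hs => hs.1.le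

theorem rightInv_le {s t : ℝ} (hs : 0 < s) (ht : t < A s) : rightInv A t ≤ s :=
  csInf_le ⟨0, fun _ hs => hs.1.le⟩ ⟨hs, ht⟩

theorem exists_lt_of_rightInv_lt (hA : ∀ t, ∃ s, 0 < s ∧ t < A s) {t u : ℝ}
    (h : rightInv A t < u) : ∃ s, 0 < s ∧ s < u ∧ t < A s :=
  let ⟨s, hs, hsu⟩ := exists_lt_of_csInf_lt (hA t) h
  ⟨s, hs.1, hsu, hs.2⟩

theorem monotone_rightInv (hA : ∀ t, ∃ s, 0 < s ∧ t < A s) : Monotone (rightInv A) :=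
  fun _ t' htt' => le_csInf (hA t') fun _ hs => rightInv_le hs.1 (htt'.trans_lt hs.2)

theorem continuousWithinAt_Ici_rightInv (hA : ∀ t, ∃ s, 0 < s ∧ t < A s) (t : ℝ) :
    ContinuousWithinAt (rightInv A) (Ici t) t := by
  refine tendsto_order.2 ⟨fun u hu => ?_, fun u hu => ?_⟩
  · filter_upwards [self_mem_nhdsWithin] with t' ht'
    exact hu.trans_le (monotone_rightInv hA ht')
  · obtain ⟨s, hs, hsu, hts⟩ := exists_lt_of_rightInv_lt hA hu
    filter_upwards [Ico_mem_nhdsGE hts] with t' ht'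
    exact (rightInv_le hs ht'.2).trans_lt hsu

theorem le_apply_rightInv (hA : ∀ t, ∃ s, 0 < s ∧ t < A s) (hmono : MonotoneOn A (Ici 0))
    (hcont : ContinuousOn A (Ici 0)) (t : ℝ) : t ≤ A (rightInv A t) := by
  have hsub : Ioi (rightInv A t) ⊆ Ici 0 := fun u hu => (rightInv_nonneg A t).trans (le_of_lt hu)
  refine ge_of_tendsto ((hcont _ (rightInv_nonneg A t)).mono hsub) ?_
  filter_upwards [self_mem_nhdsWithin] with u hu
  obtain ⟨s, hs, hsu, hts⟩ := exists_lt_of_rightInv_lt hA hu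
  exact hts.le.trans (hmono hs.le (hs.trans hsu).le hsu.le)

theorem strictMonoOn_rightInv (hA : ∀ t, ∃ s, 0 < s ∧ t < A s) (hmono : MonotoneOn A (Ici 0))
    (hcont : ContinuousOn A (Ici 0)) : StrictMonoOn (rightInv A) (Ici (A 0)) := by
  intro t ht t' _ htt'
  set u := rightInv A t'
  have htu : t < A u := htt'.trans_le (le_apply_rightInv hA hmono hcont t')
  have hu : 0 < u := (rightInv_nonneg A t').lt_of_ne fun h : 0 = u => htu.not_ge (h ▸ ht)
  have hlim : Tendsto A (𝓝[<] u) (𝓝 (A u)) :=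
    (hcont.continuousAt (Ici_mem_nhds hu)).mono_left nhdsWithin_le_nhds
  obtain ⟨s, hs, hts⟩ := Filter.nonempty_of_mem
    (inter_mem (Ioo_mem_nhdsLT hu) (hlim.eventually_const_lt htu))
  exact (rightInv_le hs.1 hts).trans_lt hs.2

theorem measurable_rightInv {Ω : Type*} [MeasurableSpace Ω] {A : Ω → ℝ → ℝ}
    (hA : ∀ ω t, ∃ s, 0 < s ∧ t < A ω s) (hmono : ∀ ω, MonotoneOn (A ω) (Ici 0))
    (hmeas : ∀ s, 0 ≤ s → Measurable fun ω => A ω s) (t : ℝ) :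
    Measurable fun ω => rightInv (A ω) t := by
  refine measurable_of_Iio fun u => ?_
  have hset : (fun ω => rightInv (A ω) t) ⁻¹' Iio u =
      ⋃ (q : ℚ) (_ : 0 < (q : ℝ) ∧ q < u), {ω | t < A ω q} := by
    ext ω
    simp only [mem_preimage, mem_Iio, mem_iUnion, mem_ofPred_eq, exists_prop]
    constructor
    · intro h
      obtain ⟨s, hs, hsu, hts⟩ := exists_lt_of_rightInv_lt (hA ω) h
      obtain ⟨q, hsq, hqu⟩ := exists_rat_btwn hsu
      exact ⟨q, ⟨hs.trans hsq, hqu⟩,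
        hts.trans_le (hmono ω hs.le (hs.trans hsq).le hsq.le)⟩
    · rintro ⟨q, ⟨hq, hqu⟩, htq⟩
      exact (rightInv_le hq htq).trans_lt hqu
  rw [hset]
  exact .iUnion fun q => .iUnion fun hq => measurableSet_lt measurable_const (hmeas q hq.1.le)

end RightInv

/-- Strict monotonicity makes the left limits of `τ` be approached from below, where `f` has left
limits. -/
theorem IsCadlag.comp {f τ : ℝ → ℝ} (hf : IsCadlag f) (hmono : Monotone τ) (hzero : 0 ≤ τ 0)
    (hstrict : StrictMonoOn τ (Ici 0))
    (hright : ∀ t, 0 ≤ t → ContinuousWithinAt τ (Ici t) t) : IsCadlag (f ∘ τ) := by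
  refine ⟨fun t ht => ?_, fun t ht => ?_⟩
  · exact (hf.1 (τ t) (hzero.trans (hmono ht))).comp
      (tendsto_nhdsWithin_iff.2 ⟨hright t ht, eventually_mem_nhdsWithin.mono fun _ hs => hmono hs⟩)
  · have hlt : ∀ s ∈ Ico 0 t, τ s < Function.leftLim τ t := fun s hs =>
      let ⟨u, hsu, hut⟩ := exists_between hs.2
      (hstrict hs.1 (hs.1.trans hsu.le) hsu).trans_le (hmono.le_leftLim hut)
    obtain ⟨L, hL⟩ := hf.2 _ (hzero.trans_lt (hlt 0 ⟨le_rfl, ht⟩))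
    refine ⟨L, hL.comp (tendsto_nhdsWithin_iff.2 ⟨hmono.tendsto_leftLim t, ?_⟩)⟩
    filter_upwards [Ico_mem_nhdsLT ht] with s hs using hlt s hs

theorem IsCadlag.ffLeft {a : ℝ} {f : ℝ → ℝ} (hf : IsCadlag f) (hinf : InfAbove a f) :
    IsCadlag (ffLeft a f) := by
  have hunb := exists_lt_occUpper hf hinf
  refine hf.comp (monotone_rightInv hunb) (rightInv_nonneg _ _) ?_ fun t _ =>
    continuousWithinAt_Ici_rightInv hunb t
  simpa only [occUpper_zero] using!
    strictMonoOn_rightInv hunb (monotoneOn_occUpper hf) (continuousOn_occUpper hf)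

theorem measurable_occUpperInv (a t : ℝ) :
    Measurable fun f : {f : Dfun // InfAbove a f.1} => occUpperInv a f.1.1 t :=
  measurable_rightInv (fun f => exists_lt_occUpper f.1.2 f.2) (fun f => monotoneOn_occUpper f.1.2)
    (fun _ hs => (measurable_occUpper a hs).comp measurable_subtype_coe) t

/-- Proposition 3.12 / `prop:ff_meas`. For every `a ∈ ℝ` the left
fast-forwarding map `N_a^l : D_{a,∞}([0,∞),ℝ) → D([0,∞),ℝ)` (which indeed takes values in
`D([0,∞),ℝ)`) is measurable from the trace on `D_{a,∞}([0,∞),ℝ)` of the Borel σ-algebra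
of the Skorokhod `J1` topology to the Borel σ-algebra of the Skorokhod `J1` topology. -/
theorem ffLeft_measurable (a : ℝ) :
    ∃ F : {f : Dfun // InfAbove a f.1} → Dfun,
      (∀ f, (F f).1 = ffLeft a f.1.1) ∧
      @Measurable _ _
        (MeasurableSpace.comap (fun f : {f : Dfun // InfAbove a f.1} => f.1) J1Borel)
        J1Borel F := by
  refine ⟨fun f => ⟨ffLeft a f.1.1, f.1.2.ffLeft f.2⟩, fun _ => rfl, ?_⟩
  refine measurable_Dfun_iff.2 fun t _ => ?_
  have hnonneg (f : Dfun) : 0 ≤ occUpperInv a f.1 t := rightInv_nonneg _ t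
  have happly := measurable_apply_toNNReal.comp
    (measurable_subtype_coe.prodMk (measurable_occUpperInv a t))
  simpa only [Function.comp_def, Real.coe_toNNReal _ (hnonneg _)] using! happly
end
end

section
/- Assume (H0). For h > 0 let G_{j,h} (j ≥ 0) be the Grünwald coefficients defined by ψ((1−ξ)/h) = Σ_{j=0}^∞ G_{j,h} ξ^j for |ξ| < 1, and define ∂^ψ_{−h} g(x) = Σ_{j=0}^∞ G_{j,h} · g(x+(j−1)h). Then for every g ∈ C_c^∞(ℝ), sup_{x∈ℝ} | ∂^ψ_{−h} g(x) − D^ψ_{−,∞} g(x) | → 0 as h → 0, where D^ψ_{−,∞} g(x) = ∫_{(0,∞)} ( g(x+y) − g(x) − y·g'(x) ) φ(dy). -/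
open MeasureTheory Set Filter Topology

noncomputable section

/-- Assumption (H0): `μ` is a nonnegative Borel measure on `(0,∞)` with
`∫ (y² ∧ y) μ(dy) < ∞` and `∫_{(0,1)} y μ(dy) = ∞`. -/
def H0 (μ : Measure ℝ) : Prop :=
  μ (Iic 0) = 0 ∧
  (∫⁻ y, ENNReal.ofReal (min (y ^ 2) y) ∂μ) < ⊤ ∧
  (∫⁻ y in Ioo (0:ℝ) 1, ENNReal.ofReal y ∂μ) = ⊤

/-- The Laplace exponent `ψ(ξ) = ∫ (e^{−ξy} − 1 + ξy) μ(dy)`. -/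
noncomputable def psiH (μ : Measure ℝ) (ξ : ℝ) : ℝ :=
  ∫ y, (Real.exp (-(ξ * y)) - 1 + ξ * y) ∂μ

/-! For a rate `r ≥ 0` let `N` be a Poisson variable of mean `r`. Expanding
`e^{-r(1-ξ)} - 1 + r(1-ξ)` in powers of `ξ`, with `r = y / h`, and integrating in `y`
identifies `G h j` as an integral of Poisson weights, up to corrections at `j = 0, 1`. Pairing with
the grid values `g (z + j h)`, where `z = x - h`, turns the Grünwald sum into the integral over `y`
of `E[g (z + N h) - g z - N (g (z + h) - g z)]`. This integrand is `O(y ∧ y²)` because `g` and `g'`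
are Lipschitz. Since `N h` has mean `y` and variance `h y`, it differs from
`g (x + y) - g x - y g' x` by `O(h y)`, uniformly in `x`; dominated convergence finishes the
proof. -/

/-- The Poisson weight `P(N = j)` for `N` of mean `r`, as a function of a real parameter `r` so that
it can be integrated in `r`; it is a probability only for `r ≥ 0`. -/
def poissonWeight (r : ℝ) (j : ℕ) : ℝ :=
  Real.exp (-r) * (r ^ j / j.factorial)

/-- The coefficient of `ξ ^ j` in `e^{-r(1-ξ)} - 1 + r(1-ξ)`. The Grünwald coefficient `G_{j,h}` is
the integral of `grunwaldWeight (y / h) j` in `y`. -/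
def grunwaldWeight (r : ℝ) (j : ℕ) : ℝ :=
  poissonWeight r j + (if j = 0 then r - 1 else 0) - (if j = 1 then r else 0)

section PoissonWeight

variable {r : ℝ}

lemma poissonWeight_nonneg (hr : 0 ≤ r) (j : ℕ) : 0 ≤ poissonWeight r j := by
  unfold poissonWeight
  positivity

lemma continuous_poissonWeight (j : ℕ) : Continuous fun r => poissonWeight r j := by
  unfold poissonWeight
  fun_prop

lemma hasSum_poissonWeight_mul_pow (r ξ : ℝ) :
    HasSum (fun j => poissonWeight r j * ξ ^ j) (Real.exp (r * (ξ - 1))) := by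
  have hexp := (NormedSpace.expSeries_div_hasSum_exp (r * ξ)).mul_left (Real.exp (-r))
  rw [← Real.exp_eq_exp_ℝ, ← Real.exp_add] at hexp
  convert! hexp using 2 with j
  · rw [poissonWeight, mul_pow]
    ring
  · ring

lemma hasSum_poissonWeight (r : ℝ) : HasSum (poissonWeight r) 1 := by
  simpa using hasSum_poissonWeight_mul_pow r 1

lemma succ_mul_poissonWeight_succ (r : ℝ) (j : ℕ) :
    ((j : ℝ) + 1) * poissonWeight r (j + 1) = r * poissonWeight r j := by
  unfold poissonWeight
  rw [Nat.factorial_succ]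
  push_cast
  field_simp
  ring

lemma hasSum_poissonWeight_mul_natCast (r : ℝ) :
    HasSum (fun j : ℕ => poissonWeight r j * j) r := by
  rw [← hasSum_nat_add_iff' 1]
  have hshift := (hasSum_poissonWeight r).mul_left r
  convert! hshift using 1
  · ext j
    push_cast
    linear_combination succ_mul_poissonWeight_succ r j
  · simp

lemma hasSum_poissonWeight_mul_descFactorial_two (r : ℝ) :
    HasSum (fun j : ℕ => poissonWeight r j * (j * (j - 1))) (r ^ 2) := by
  rw [← hasSum_nat_add_iff' 1]
  have hshift := (hasSum_poissonWeight_mul_natCast r).mul_left r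
  convert! hshift using 1
  · ext j
    push_cast
    linear_combination (j : ℝ) * succ_mul_poissonWeight_succ r j
  · simp [sq]

lemma hasSum_poissonWeight_mul_affine (r c d : ℝ) :
    HasSum (fun j : ℕ => poissonWeight r j * (c + j * d)) (c + r * d) := by
  convert! ((hasSum_poissonWeight r).mul_right c).add
    ((hasSum_poissonWeight_mul_natCast r).mul_right d) using 2 <;> ring

lemma hasSum_poissonWeight_mul_sub_sq (r : ℝ) :
    HasSum (fun j : ℕ => poissonWeight r j * (j - r) ^ 2) r := by
  convert! (hasSum_poissonWeight_mul_descFactorial_two r).add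
    (hasSum_poissonWeight_mul_affine r (r ^ 2) (1 - 2 * r)) using 2 <;> ring

end PoissonWeight

section GrunwaldWeight

variable {r : ℝ} {a : ℕ → ℝ}

lemma continuous_grunwaldWeight (j : ℕ) : Continuous fun r => grunwaldWeight r j := by
  have := continuous_poissonWeight j
  unfold grunwaldWeight
  split_ifs <;> fun_prop

lemma hasSum_grunwaldWeight_mul_iff {s : ℝ} :
    HasSum (fun j => grunwaldWeight r j * a j) s ↔
      HasSum (fun j : ℕ => poissonWeight r j * (a j - a 0 - j * (a 1 - a 0))) s := by
  have hdiff : HasSum (fun j : ℕ => grunwaldWeight r j * a j -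
      poissonWeight r j * (a j - a 0 - j * (a 1 - a 0))) 0 := by
    have hzero : HasSum (fun j : ℕ => if j = 0 then (r - 1) * a 0 else 0) ((r - 1) * a 0) :=
      hasSum_ite_eq 0 _
    have hone : HasSum (fun j : ℕ => if j = 1 then r * a 1 else 0) (r * a 1) :=
      hasSum_ite_eq 1 _
    convert! ((hasSum_poissonWeight_mul_affine r (a 0) (a 1 - a 0)).add hzero).sub hone using 1
    · ext j
      rw [grunwaldWeight]
      rcases j with _ | _ | j
      · simp only [↓reduceIte, zero_ne_one, sub_zero, sub_self, CharP.cast_eq_zero, zero_mul,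
          mul_zero, add_zero]
        ring
      · simp only [zero_add, one_ne_zero, ↓reduceIte, add_zero, Nat.cast_one, one_mul, sub_self,
          mul_zero, sub_zero, add_sub_cancel]
        ring
      · simp only [Nat.add_eq_zero_iff, one_ne_zero, and_false, and_self, ↓reduceIte, add_zero,
          Nat.add_eq_right, sub_zero, Nat.cast_add, Nat.cast_one]
        ring
    · ring
  constructor <;> intro h
  · simpa using h.sub hdiff
  · simpa using h.add hdiff

lemma tsum_grunwaldWeight_mul (r : ℝ) (a : ℕ → ℝ) :
    ∑' j, grunwaldWeight r j * a j =
      ∑' j : ℕ, poissonWeight r j * (a j - a 0 - j * (a 1 - a 0)) :=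
  tsum_eq_tsum_of_hasSum_iff_hasSum hasSum_grunwaldWeight_mul_iff

lemma hasSum_grunwaldWeight_mul_pow (r ξ : ℝ) :
    HasSum (fun j => grunwaldWeight r j * ξ ^ j)
      (Real.exp (-(r * (1 - ξ))) - 1 + r * (1 - ξ)) := by
  rw [hasSum_grunwaldWeight_mul_iff]
  convert! (hasSum_poissonWeight_mul_pow r ξ).sub
    (hasSum_poissonWeight_mul_affine r 1 (ξ - 1)) using 1
  · ext j
    ring
  · ring_nf

lemma grunwaldWeight_one (r : ℝ) : grunwaldWeight r 1 = -(r * (1 - Real.exp (-r))) := by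
  simp only [grunwaldWeight, poissonWeight, pow_one, Nat.factorial_one, Nat.cast_one, div_one,
    one_ne_zero, if_false, if_true]
  ring

lemma grunwaldWeight_one_nonpos (hr : 0 ≤ r) : grunwaldWeight r 1 ≤ 0 := by
  rw [grunwaldWeight_one, neg_nonpos]
  exact mul_nonneg hr (sub_nonneg.2 (Real.exp_le_one_iff.2 (neg_nonpos.2 hr)))

lemma grunwaldWeight_nonneg (hr : 0 ≤ r) {j : ℕ} (hj : j ≠ 1) : 0 ≤ grunwaldWeight r j := by
  rcases eq_or_ne j 0 with rfl | hj0
  · have hvalue : grunwaldWeight r 0 = Real.exp (-r) + (r - 1) := by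
      simp [grunwaldWeight, poissonWeight]
    linarith [Real.add_one_le_exp (-r)]
  · simpa [grunwaldWeight, hj, hj0] using poissonWeight_nonneg hr j

lemma hasSum_abs_grunwaldWeight_mul_one_add (hr : 0 ≤ r) :
    HasSum (fun j : ℕ => |grunwaldWeight r j| * (1 + j)) (4 * (r * (1 - Real.exp (-r)))) := by
  -- `grunwaldWeight r` annihilates affine sequences and only its entry at `1` is negative.
  have hzero : HasSum (fun j : ℕ => grunwaldWeight r j * (1 + j)) 0 := by
    rw [hasSum_grunwaldWeight_mul_iff]
    simp
  have hone : HasSum (fun j : ℕ => if j = 1 then 4 * grunwaldWeight r 1 else 0)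
      (4 * grunwaldWeight r 1) := hasSum_ite_eq 1 _
  convert! hzero.sub hone using 1
  · ext j
    split_ifs with hj
    · subst hj
      rw [abs_of_nonpos (grunwaldWeight_one_nonpos hr)]
      push_cast
      ring
    · rw [abs_of_nonneg (grunwaldWeight_nonneg hr hj), sub_zero]
  · rw [grunwaldWeight_one]
    ring

lemma abs_tsum_grunwaldWeight_mul_le {b : ℕ → ℝ} {s : ℝ} (hr : 0 ≤ r)
    (hb : HasSum (fun j => poissonWeight r j * b j) s)
    (ha : ∀ j : ℕ, |a j - a 0 - j * (a 1 - a 0)| ≤ b j) :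
    |∑' j, grunwaldWeight r j * a j| ≤ s := by
  rw [tsum_grunwaldWeight_mul]
  refine tsum_of_norm_bounded (E := ℝ) hb fun j => ?_
  rw [Real.norm_eq_abs, abs_mul, abs_of_nonneg (poissonWeight_nonneg hr j)]
  exact mul_le_mul_of_nonneg_left (ha j) (poissonWeight_nonneg hr j)

lemma abs_tsum_grunwaldWeight_mul_le_linear {M : ℝ} (hr : 0 ≤ r)
    (ha : ∀ j : ℕ, |a j - a 0| ≤ M * j) :
    |∑' j, grunwaldWeight r j * a j| ≤ 2 * M * r := by
  have hb : HasSum (fun j : ℕ => poissonWeight r j * (2 * M * j)) (2 * M * r) := by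
    simpa only [mul_left_comm] using (hasSum_poissonWeight_mul_natCast r).mul_left (2 * M)
  refine abs_tsum_grunwaldWeight_mul_le hr hb fun j => ?_
  calc |a j - a 0 - j * (a 1 - a 0)| ≤ |a j - a 0| + |j * (a 1 - a 0)| := abs_sub _ _
    _ = |a j - a 0| + j * |a 1 - a 0| := by rw [abs_mul, Nat.abs_cast]
    _ ≤ M * j + j * (M * (1 : ℕ)) := by gcongr <;> exact ha _
    _ = 2 * M * j := by push_cast; ring

lemma abs_sub_sub_natCast_mul_le {D : ℝ}
    (ha : ∀ j : ℕ, |a (j + 1) - a j - (a 1 - a 0)| ≤ D * j) (j : ℕ) :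
    |a j - a 0 - j * (a 1 - a 0)| ≤ D / 2 * (j * (j - 1)) := by
  induction j with
  | zero => simp
  | succ j ih =>
    calc |a (j + 1) - a 0 - (j + 1 : ℕ) * (a 1 - a 0)|
        = |(a j - a 0 - j * (a 1 - a 0)) + (a (j + 1) - a j - (a 1 - a 0))| := by
          push_cast
          ring_nf
      _ ≤ D / 2 * (j * (j - 1)) + D * j := (abs_add_le _ _).trans (add_le_add ih (ha j))
      _ = D / 2 * ((j + 1 : ℕ) * ((j + 1 : ℕ) - 1)) := by
          push_cast
          ring

lemma abs_tsum_grunwaldWeight_mul_le_quadratic {D : ℝ} (hr : 0 ≤ r)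
    (ha : ∀ j : ℕ, |a (j + 1) - a j - (a 1 - a 0)| ≤ D * j) :
    |∑' j, grunwaldWeight r j * a j| ≤ D / 2 * r ^ 2 := by
  have hb : HasSum (fun j : ℕ => poissonWeight r j * (D / 2 * (j * (j - 1)))) (D / 2 * r ^ 2) := by
    simpa only [mul_left_comm] using
      (hasSum_poissonWeight_mul_descFactorial_two r).mul_left (D / 2)
  exact abs_tsum_grunwaldWeight_mul_le hr hb (abs_sub_sub_natCast_mul_le ha)

end GrunwaldWeight

section MeanValue

variable {E : Type*} [NormedAddCommGroup E] [NormedSpace ℝ E] {f : ℝ → E} {K : NNReal}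

lemma norm_sub_sub_smul_deriv_le (hf : Differentiable ℝ f) (hK : LipschitzWith K (deriv f))
    (a b : ℝ) : ‖f b - f a - (b - a) • deriv f a‖ ≤ K * (b - a) ^ 2 := by
  have hderiv (x : ℝ) : HasDerivAt (fun x => f x - x • deriv f a) (deriv f x - deriv f a) x := by
    simpa only [one_smul] using
      (hf x).hasDerivAt.fun_sub ((hasDerivAt_id' x).smul_const (deriv f a))
  have hbound : ∀ x ∈ uIcc a b, ‖deriv f x - deriv f a‖ ≤ K * |b - a| := fun x hx =>
    (hK.norm_sub_le x a).trans (by gcongr; exact abs_sub_left_of_mem_uIcc hx)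
  calc ‖f b - f a - (b - a) • deriv f a‖
      = ‖f b - b • deriv f a - (f a - a • deriv f a)‖ := by
        congr 1
        module
    _ ≤ K * |b - a| * ‖b - a‖ :=
        (convex_uIcc a b).norm_image_sub_le_of_norm_hasDerivWithin_le
          (fun x _ => (hderiv x).hasDerivWithinAt) hbound left_mem_uIcc right_mem_uIcc
    _ = K * (b - a) ^ 2 := by rw [Real.norm_eq_abs, mul_assoc, abs_mul_abs_self, sq]

lemma norm_increment_sub_increment_le (hf : Differentiable ℝ f) (hK : LipschitzWith K (deriv f))
    (s t y : ℝ) : ‖f (s + y) - f s - (f (t + y) - f t)‖ ≤ K * |y| * |s - t| := by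
  have hderiv (x : ℝ) :
      HasDerivAt (fun x => f (x + y) - f x) (deriv f (x + y) - deriv f x) x :=
    ((hf (x + y)).hasDerivAt.comp_add_const x y).sub (hf x).hasDerivAt
  exact convex_univ.norm_image_sub_le_of_norm_hasDerivWithin_le
    (fun x _ => (hderiv x).hasDerivWithinAt)
    (fun x _ => by simpa using hK.norm_sub_le (x + y) x) (mem_univ t) (mem_univ s)

end MeanValue

lemma le_max_mul_min {x y z a b : ℝ} (hx : 0 ≤ x) (hy : 0 ≤ y) (ha : z ≤ a * x)
    (hb : z ≤ b * y) : z ≤ max a b * min x y := by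
  rcases min_choice x y with h | h <;> rw [h]
  · exact ha.trans (mul_le_mul_of_nonneg_right (le_max_left a b) hx)
  · exact hb.trans (mul_le_mul_of_nonneg_right (le_max_right a b) hy)

section Grid

variable {g : ℝ → ℝ} {K L : NNReal} {h y : ℝ}

lemma abs_grid_sub_le (hL : LipschitzWith L g) (hh : 0 ≤ h) (z : ℝ) (j : ℕ) :
    |g (z + j * h) - g z| ≤ L * h * j := by
  calc |g (z + j * h) - g z| ≤ L * |z + j * h - z| := hL.norm_sub_le _ _
    _ = L * h * j := by
        rw [add_sub_cancel_left, abs_of_nonneg (by positivity)]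
        ring

lemma abs_grid_le (hL : LipschitzWith L g) (hh : 0 ≤ h) (z : ℝ) (j : ℕ) :
    |g (z + j * h)| ≤ max |g z| (L * h) * (1 + j) := by
  calc |g (z + j * h)| ≤ |g z| + |g (z + j * h) - g z| := by
        linarith [abs_sub_abs_le_abs_sub (g (z + j * h)) (g z)]
    _ ≤ |g z| + L * h * j := by gcongr; exact abs_grid_sub_le hL hh z j
    _ ≤ max |g z| (L * h) + max |g z| (L * h) * j := by
        gcongr
        exacts [le_max_left _ _, le_max_right _ _]
    _ = max |g z| (L * h) * (1 + j) := by ring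

lemma abs_taylor_remainder_le_mul_min (hg : Differentiable ℝ g) (hL : LipschitzWith L g)
    (hK : LipschitzWith K (deriv g)) (hy : 0 ≤ y) (x : ℝ) :
    |g (x + y) - g x - y * deriv g x| ≤ max K (2 * L) * min (y ^ 2) y := by
  refine le_max_mul_min (sq_nonneg y) hy ?_ ?_
  · simpa using norm_sub_sub_smul_deriv_le hg hK x (x + y)
  · have hincr : |g (x + y) - g x| ≤ L * y := by
      simpa [abs_of_nonneg hy] using hL.norm_sub_le (x + y) x
    have hderiv : |deriv g x| ≤ L := norm_deriv_le_of_lipschitz hL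
    calc |g (x + y) - g x - y * deriv g x|
        ≤ |g (x + y) - g x| + |y * deriv g x| := abs_sub _ _
      _ = |g (x + y) - g x| + y * |deriv g x| := by rw [abs_mul, abs_of_nonneg hy]
      _ ≤ L * y + y * L := by gcongr
      _ = 2 * L * y := by ring

lemma abs_tsum_grunwaldWeight_mul_grid_le (hg : Differentiable ℝ g) (hL : LipschitzWith L g)
    (hK : LipschitzWith K (deriv g)) (hh : 0 < h) (hy : 0 ≤ y) (z : ℝ) :
    |∑' j : ℕ, grunwaldWeight (y / h) j * g (z + j * h)| ≤
      max K (2 * L) * min (y ^ 2) y := by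
  have hr : 0 ≤ y / h := by positivity
  refine le_max_mul_min (sq_nonneg y) hy ?_ ?_
  · have hsecond (j : ℕ) : |g (z + (j + 1 : ℕ) * h) - g (z + j * h) -
        (g (z + (1 : ℕ) * h) - g (z + (0 : ℕ) * h))| ≤ K * h ^ 2 * j := by
      convert! norm_increment_sub_increment_le hg hK (z + j * h) z h using 1
      · rw [Real.norm_eq_abs]
        push_cast
        ring_nf
      · rw [add_sub_cancel_left, abs_of_pos hh, abs_of_nonneg (by positivity)]
        ring
    calc |∑' j : ℕ, grunwaldWeight (y / h) j * g (z + j * h)|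
        ≤ K * h ^ 2 / 2 * (y / h) ^ 2 := abs_tsum_grunwaldWeight_mul_le_quadratic hr hsecond
      _ = K * y ^ 2 / 2 := by field_simp
      _ ≤ K * y ^ 2 := half_le_self (by positivity)
  · calc |∑' j : ℕ, grunwaldWeight (y / h) j * g (z + j * h)|
        ≤ 2 * (L * h) * (y / h) :=
          abs_tsum_grunwaldWeight_mul_le_linear hr fun j => by
            simpa using abs_grid_sub_le hL hh.le z j
      _ = 2 * L * y := by field_simp

lemma exists_hasSum_poissonWeight_mul_taylor_remainder (hg : Differentiable ℝ g)
    (hK : LipschitzWith K (deriv g)) (hh : 0 < h) (hy : 0 ≤ y) (z : ℝ) :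
    ∃ s, |s| ≤ K * h * y ∧ HasSum (fun j : ℕ => poissonWeight (y / h) j *
      (g (z + j * h) - g (z + y) - (j * h - y) * deriv g (z + y))) s := by
  have hr : 0 ≤ y / h := by positivity
  have hvar : HasSum (fun j : ℕ => poissonWeight (y / h) j * (K * (j * h - y) ^ 2))
      (K * h * y) := by
    convert! (hasSum_poissonWeight_mul_sub_sq (y / h)).mul_left (K * h ^ 2) using 1
    · ext j
      field_simp
    · field_simp
  have hbound (j : ℕ) : ‖poissonWeight (y / h) j *
      (g (z + j * h) - g (z + y) - (j * h - y) * deriv g (z + y))‖ ≤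
        poissonWeight (y / h) j * (K * (j * h - y) ^ 2) := by
    rw [norm_mul, Real.norm_of_nonneg (poissonWeight_nonneg hr j)]
    refine mul_le_mul_of_nonneg_left ?_ (poissonWeight_nonneg hr j)
    simpa using norm_sub_sub_smul_deriv_le hg hK (z + y) (z + j * h)
  exact ⟨_, tsum_of_norm_bounded hvar hbound,
    (Summable.of_norm_bounded hvar.summable hbound).hasSum⟩

lemma abs_tsum_grunwaldWeight_mul_grid_sub_le (hg : Differentiable ℝ g)
    (hK : LipschitzWith K (deriv g)) (hh : 0 < h) (hy : 0 ≤ y) (z : ℝ) :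
    |∑' j : ℕ, grunwaldWeight (y / h) j * g (z + j * h) -
      (g (z + h + y) - g (z + h) - y * deriv g (z + h))| ≤ h * (3 * K * y) := by
  obtain ⟨s, hs, hsum⟩ := exists_hasSum_poissonWeight_mul_taylor_remainder hg hK hh hy z
  have htsum : ∑' j : ℕ, grunwaldWeight (y / h) j * g (z + j * h) =
      s + (g (z + y) - g z) - y / h * (g (z + h) - g z) := by
    refine (hasSum_grunwaldWeight_mul_iff.2 ?_).tsum_eq
    convert! hsum.add (hasSum_poissonWeight_mul_affine (y / h)
      (g (z + y) - g z - y * deriv g (z + y))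
      (h * deriv g (z + y) - (g (z + h) - g z))) using 1
    · ext j
      push_cast
      ring_nf
    · field_simp
      ring
  have hshift : |g (z + y) - g z - (g (z + h + y) - g (z + h))| ≤ K * h * y := by
    convert! norm_increment_sub_increment_le hg hK z (z + h) y using 1
    rw [sub_add_cancel_left, abs_neg, abs_of_nonneg hy, abs_of_pos hh]
    ring
  have hslope : |y / h * (g z - g (z + h) + h * deriv g (z + h))| ≤ K * h * y := by
    rw [abs_mul, abs_of_nonneg (by positivity)]
    calc y / h * |g z - g (z + h) + h * deriv g (z + h)| ≤ y / h * (K * h ^ 2) := by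
          gcongr
          simpa using norm_sub_sub_smul_deriv_le hg hK (z + h) z
      _ = K * h * y := by field_simp
  rw [htsum]
  calc |s + (g (z + y) - g z) - y / h * (g (z + h) - g z) -
        (g (z + h + y) - g (z + h) - y * deriv g (z + h))|
      = |s + (g (z + y) - g z - (g (z + h + y) - g (z + h))) +
          y / h * (g z - g (z + h) + h * deriv g (z + h))| := by
        congr 1
        field_simp
        ring
    _ ≤ K * h * y + K * h * y + K * h * y :=
        (abs_add_three _ _ _).trans (add_le_add_three hs hshift hslope)
    _ = h * (3 * K * y) := by ring

end Grid

lemma eq_of_hasSum_mul_pow {𝕜 : Type*} [NontriviallyNormedField 𝕜] {a b : ℕ → 𝕜} {f : 𝕜 → 𝕜}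
    (ha : ∀ᶠ ξ in 𝓝 0, HasSum (fun j => a j * ξ ^ j) (f ξ))
    (hb : ∀ᶠ ξ in 𝓝 0, HasSum (fun j => b j * ξ ^ j) (f ξ)) : a = b := by
  have hseries {c : ℕ → 𝕜} (hc : ∀ᶠ ξ in 𝓝 0, HasSum (fun j => c j * ξ ^ j) (f ξ)) :
      HasFPowerSeriesAt f (FormalMultilinearSeries.ofScalars 𝕜 c) 0 := by
    rw [hasFPowerSeriesAt_iff]
    simpa [FormalMultilinearSeries.coeff_ofScalars, mul_comm] using hc
  exact FormalMultilinearSeries.ofScalars_series_injective 𝕜 𝕜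
    ((hseries ha).eq_formalMultilinearSeries (hseries hb))

lemma tendsto_integral_min_mul {α : Type*} [MeasurableSpace α] {μ : Measure α} {f w : α → ℝ}
    (hf : Integrable f μ) (hw : AEStronglyMeasurable w μ) (hf0 : 0 ≤ᵐ[μ] f) (hw0 : 0 ≤ᵐ[μ] w) :
    Tendsto (fun h : ℝ => ∫ y, min (h * w y) (f y) ∂μ) (𝓝[>] 0) (𝓝 0) := by
  rw [show 𝓝 (0 : ℝ) = 𝓝 (∫ _, (0 : ℝ) ∂μ) by rw [integral_zero]]
  refine tendsto_integral_filter_of_dominated_convergence f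
    (.of_forall fun h => (hw.const_mul h).inf hf.aestronglyMeasurable) ?_ hf ?_
  · filter_upwards [self_mem_nhdsWithin] with h hh
    filter_upwards [hf0, hw0] with y hfy hwy
    rw [Real.norm_of_nonneg (le_min (mul_nonneg (le_of_lt hh) hwy) hfy)]
    exact min_le_right _ _
  · filter_upwards [hf0] with y (hfy : 0 ≤ f y)
    have hcont : Continuous fun h : ℝ => min (h * w y) (f y) := by fun_prop
    have hlim := (hcont.tendsto 0).mono_left (nhdsWithin_le_nhds (s := Ioi 0))
    rwa [zero_mul, min_eq_left hfy] at hlim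

section LevyMeasure

variable {μ : Measure ℝ} {h : ℝ}

lemma integrable_div_mul_one_sub_exp (hpos : ∀ᵐ y ∂μ, 0 < y)
    (hint : Integrable (fun y => min (y ^ 2) y) μ) (hh : 0 < h) :
    Integrable (fun y => y / h * (1 - Real.exp (-(y / h)))) μ := by
  refine (hint.const_mul (max (1 / h ^ 2) (1 / h))).mono' (by fun_prop) ?_
  filter_upwards [hpos] with y hy
  have hr : 0 ≤ y / h := by positivity
  have hle_one : 1 - Real.exp (-(y / h)) ≤ 1 := sub_le_self _ (Real.exp_pos _).le
  have hle_self : 1 - Real.exp (-(y / h)) ≤ y / h := by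
    linarith [Real.add_one_le_exp (-(y / h))]
  have hnonneg : 0 ≤ 1 - Real.exp (-(y / h)) :=
    sub_nonneg.2 (Real.exp_le_one_iff.2 (neg_nonpos.2 hr))
  rw [Real.norm_of_nonneg (mul_nonneg hr hnonneg)]
  refine le_max_mul_min (sq_nonneg y) hy.le ?_ ?_
  · calc y / h * (1 - Real.exp (-(y / h))) ≤ y / h * (y / h) := by gcongr
      _ = 1 / h ^ 2 * y ^ 2 := by ring
  · calc y / h * (1 - Real.exp (-(y / h))) ≤ y / h * 1 := by gcongr
      _ = 1 / h * y := by ring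

lemma hasSum_integral_grunwaldWeight_mul (hpos : ∀ᵐ y ∂μ, 0 < y)
    (hint : Integrable (fun y => min (y ^ 2) y) μ) (hh : 0 < h) {a : ℕ → ℝ} {M : ℝ}
    (ha : ∀ j : ℕ, |a j| ≤ M * (1 + j)) :
    HasSum (fun j => (∫ y, grunwaldWeight (y / h) j ∂μ) * a j)
      (∫ y, ∑' j, grunwaldWeight (y / h) j * a j ∂μ) := by
  simp only [← integral_mul_const]
  have hbound (j : ℕ) (y : ℝ) : ‖grunwaldWeight (y / h) j * a j‖ ≤
      |grunwaldWeight (y / h) j| * (1 + j) * M := by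
    rw [norm_mul, Real.norm_eq_abs, Real.norm_eq_abs, mul_assoc, mul_comm _ M]
    exact mul_le_mul_of_nonneg_left (ha j) (abs_nonneg _)
  have hsum : ∀ᵐ y ∂μ, HasSum (fun j : ℕ => |grunwaldWeight (y / h) j| * (1 + j) * M)
      (4 * (y / h * (1 - Real.exp (-(y / h)))) * M) := by
    filter_upwards [hpos] with y hy
    exact (hasSum_abs_grunwaldWeight_mul_one_add (by positivity)).mul_right M
  refine hasSum_integral_of_dominated_convergence
    (fun (j : ℕ) y => |grunwaldWeight (y / h) j| * (1 + j) * M)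
    (fun j => ?_) (fun j => .of_forall (hbound j)) (hsum.mono fun y hy => hy.summable) ?_
    (hsum.mono fun y hy => (Summable.of_norm_bounded hy.summable (hbound · y)).hasSum)
  · exact (((continuous_grunwaldWeight j).comp (continuous_id.div_const h)).mul_const
      (a j)).aestronglyMeasurable
  · refine (((integrable_div_mul_one_sub_exp hpos hint hh).const_mul 4).mul_const M).congr ?_
    exact hsum.mono fun y hy => hy.tsum_eq.symm

lemma grunwald_coeff_eq_integral (hpos : ∀ᵐ y ∂μ, 0 < y)
    (hint : Integrable (fun y => min (y ^ 2) y) μ) (hh : 0 < h) {c : ℕ → ℝ}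
    (hc : ∀ ξ : ℝ, |ξ| < 1 → HasSum (fun j => c j * ξ ^ j) (psiH μ ((1 - ξ) / h))) :
    c = fun j => ∫ y, grunwaldWeight (y / h) j ∂μ := by
  have hball : ∀ᶠ ξ : ℝ in 𝓝 0, |ξ| < 1 := by
    simpa using eventually_abs_sub_lt (0 : ℝ) one_pos
  refine eq_of_hasSum_mul_pow (hball.mono hc) (hball.mono fun ξ hξ => ?_)
  have hpow (j : ℕ) : |ξ ^ j| ≤ 1 * (1 + j) := by
    rw [abs_pow]
    linarith [pow_le_one₀ (n := j) (abs_nonneg ξ) hξ.le, (Nat.cast_nonneg j : (0 : ℝ) ≤ j)]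
  convert! hasSum_integral_grunwaldWeight_mul hpos hint hh hpow using 1
  refine integral_congr_ae (.of_forall fun y => ?_)
  simp only [(hasSum_grunwaldWeight_mul_pow (y / h) ξ).tsum_eq]
  ring_nf

variable {g : ℝ → ℝ} {K L : NNReal}

lemma integrable_taylor_remainder (hpos : ∀ᵐ y ∂μ, 0 < y)
    (hint : Integrable (fun y => min (y ^ 2) y) μ) (hg : Differentiable ℝ g)
    (hL : LipschitzWith L g) (hK : LipschitzWith K (deriv g)) (x : ℝ) :
    Integrable (fun y => g (x + y) - g x - y * deriv g x) μ := by
  have := hg.continuous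
  refine (hint.const_mul (max K (2 * L) : ℝ)).mono' (by fun_prop) ?_
  filter_upwards [hpos] with y hy
  exact abs_taylor_remainder_le_mul_min hg hL hK hy.le x

lemma integrable_tsum_grunwaldWeight_mul_grid (hpos : ∀ᵐ y ∂μ, 0 < y)
    (hint : Integrable (fun y => min (y ^ 2) y) μ) (hg : Differentiable ℝ g)
    (hL : LipschitzWith L g) (hK : LipschitzWith K (deriv g)) (hh : 0 < h) (z : ℝ) :
    Integrable (fun y => ∑' j : ℕ, grunwaldWeight (y / h) j * g (z + j * h)) μ := by
  have hmeas : Measurable fun y => ∑' j : ℕ, grunwaldWeight (y / h) j * g (z + j * h) :=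
    Measurable.tsum fun j => ((continuous_grunwaldWeight j).measurable.comp
      (measurable_id.div_const h)).mul_const _
  refine (hint.const_mul (max K (2 * L) : ℝ)).mono' hmeas.aestronglyMeasurable ?_
  filter_upwards [hpos] with y hy
  exact abs_tsum_grunwaldWeight_mul_grid_le hg hL hK hh hy.le z

lemma tsum_integral_grunwaldWeight_mul (hpos : ∀ᵐ y ∂μ, 0 < y)
    (hint : Integrable (fun y => min (y ^ 2) y) μ) (hL : LipschitzWith L g) (hh : 0 < h) (x : ℝ) :
    ∑' j : ℕ, (∫ y, grunwaldWeight (y / h) j ∂μ) * g (x + ((j : ℝ) - 1) * h) =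
      ∫ y, ∑' j : ℕ, grunwaldWeight (y / h) j * g (x - h + j * h) ∂μ := by
  rw [← (hasSum_integral_grunwaldWeight_mul hpos hint hh (abs_grid_le hL hh.le (x - h))).tsum_eq]
  refine tsum_congr fun j => ?_
  congr 2
  ring

theorem abs_grunwald_sub_integral_le (hpos : ∀ᵐ y ∂μ, 0 < y)
    (hint : Integrable (fun y => min (y ^ 2) y) μ) (hh : 0 < h) {c : ℕ → ℝ}
    (hc : ∀ ξ : ℝ, |ξ| < 1 → HasSum (fun j => c j * ξ ^ j) (psiH μ ((1 - ξ) / h)))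
    (hg : Differentiable ℝ g) (hL : LipschitzWith L g) (hK : LipschitzWith K (deriv g)) (x : ℝ) :
    |(∑' j : ℕ, c j * g (x + ((j : ℝ) - 1) * h)) - ∫ y, (g (x + y) - g x - y * deriv g x) ∂μ| ≤
      ∫ y, min (h * (3 * K * y)) (2 * max (K : ℝ) (2 * L) * min (y ^ 2) y) ∂μ := by
  simp only [grunwald_coeff_eq_integral hpos hint hh hc]
  rw [tsum_integral_grunwaldWeight_mul hpos hint hL hh,
    ← integral_sub (integrable_tsum_grunwaldWeight_mul_grid hpos hint hg hL hK hh _)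
      (integrable_taylor_remainder hpos hint hg hL hK x)]
  have hbound : Integrable
      (fun y => min (h * (3 * K * y)) (2 * max (K : ℝ) (2 * L) * min (y ^ 2) y)) μ := by
    refine (hint.const_mul (2 * max (K : ℝ) (2 * L))).mono' (by fun_prop) ?_
    filter_upwards [hpos] with y hy
    rw [Real.norm_of_nonneg (by positivity)]
    exact min_le_right _ _
  refine norm_integral_le_of_norm_le (G := ℝ) hbound ?_
  filter_upwards [hpos] with y hy
  refine le_min ?_ ?_
  · simpa using abs_tsum_grunwaldWeight_mul_grid_sub_le hg hK hh hy.le (x - h)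
  · calc _ ≤ |∑' j : ℕ, grunwaldWeight (y / h) j * g (x - h + j * h)| +
          |g (x + y) - g x - y * deriv g x| := abs_sub _ _
      _ ≤ max (K : ℝ) (2 * L) * min (y ^ 2) y + max (K : ℝ) (2 * L) * min (y ^ 2) y :=
          add_le_add (abs_tsum_grunwaldWeight_mul_grid_le hg hL hK hh hy.le _)
            (abs_taylor_remainder_le_mul_min hg hL hK hy.le x)
      _ = 2 * max (K : ℝ) (2 * L) * min (y ^ 2) y := by ring

theorem grunwald_converges_uniformly_general (hpos : ∀ᵐ y ∂μ, 0 < y)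
    (hint : Integrable (fun y => min (y ^ 2) y) μ) {G : ℝ → ℕ → ℝ}
    (hG : ∀ h : ℝ, 0 < h → ∀ ξ : ℝ, |ξ| < 1 →
      HasSum (fun j : ℕ => G h j * ξ ^ j) (psiH μ ((1 - ξ) / h)))
    (hg : Differentiable ℝ g) (hL : LipschitzWith L g) (hK : LipschitzWith K (deriv g)) :
    Tendsto (fun h : ℝ =>
        ⨆ x : ℝ, |(∑' j : ℕ, G h j * g (x + ((j : ℝ) - 1) * h)) -
          ∫ y, (g (x + y) - g x - y * deriv g x) ∂μ|)
      (𝓝[>] 0) (𝓝 0) := by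
  have hlim := tendsto_integral_min_mul (hint.const_mul (2 * max (K : ℝ) (2 * L)))
    (w := fun y => 3 * K * y) (by fun_prop)
    (hpos.mono fun y hy => by dsimp; positivity) (hpos.mono fun y hy => by dsimp; positivity)
  refine squeeze_zero' (.of_forall fun h => Real.iSup_nonneg fun x => abs_nonneg _) ?_ hlim
  filter_upwards [self_mem_nhdsWithin] with h hh
  exact ciSup_le (abs_grunwald_sub_integral_le hpos hint hh (hG h hh) hg hL hK)

end LevyMeasure

lemma H0.ae_pos {μ : Measure ℝ} (h0 : H0 μ) : ∀ᵐ y ∂μ, 0 < y :=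
  (measure_eq_zero_iff_ae_notMem.1 h0.1).mono fun _ hy => not_le.1 hy

lemma H0.integrable_min_sq_self {μ : Measure ℝ} (h0 : H0 μ) :
    Integrable (fun y => min (y ^ 2) y) μ := by
  refine ⟨by fun_prop, ?_⟩
  rw [hasFiniteIntegral_iff_ofReal]
  · exact h0.2.1
  · exact h0.ae_pos.mono fun y hy => le_min (sq_nonneg y) hy.le

/-- part of the proof of Proposition 4.9 / `prop:gruntolevy`. Under
(H0), let `G h j` (for `h > 0`, `j ∈ ℕ`) be the Grünwald coefficients determined by
`ψ((1−ξ)/h) = Σ_{j≥0} G_{j,h} ξ^j` for `|ξ| < 1`. Then for every `g ∈ C_c^∞(ℝ)` the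
Grünwald approximation `∂^ψ_{−h} g(x) = Σ_{j≥0} G_{j,h} g(x+(j−1)h)` converges to
`D^ψ_{−,∞} g(x) = ∫ (g(x+y) − g(x) − y g'(x)) μ(dy)` uniformly in `x` as `h ↓ 0`. -/
theorem grunwald_converges_uniformly (μ : Measure ℝ) (h0 : H0 μ)
    (G : ℝ → ℕ → ℝ)
    (hG : ∀ h : ℝ, 0 < h → ∀ ξ : ℝ, |ξ| < 1 →
      HasSum (fun j : ℕ => G h j * ξ ^ j) (psiH μ ((1 - ξ) / h)))
    (g : ℝ → ℝ) (hg : ContDiff ℝ (⊤ : ℕ∞) g) (hgsupp : HasCompactSupport g) :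
    Tendsto (fun h : ℝ =>
        ⨆ x : ℝ, |(∑' j : ℕ, G h j * g (x + ((j : ℝ) - 1) * h)) -
          ∫ y, (g (x + y) - g x - y * deriv g x) ∂μ|)
      (𝓝[>] 0) (𝓝 0) := by
  obtain ⟨L, hL⟩ := hg.lipschitzWith_of_hasCompactSupport hgsupp (by simp)
  have hderiv : ContDiff ℝ (⊤ : ℕ∞) (deriv g) := (contDiff_infty_iff_deriv.1 hg).2
  obtain ⟨K, hK⟩ := hderiv.lipschitzWith_of_hasCompactSupport hgsupp.deriv (by simp)
  exact grunwald_converges_uniformly_general h0.ae_pos h0.integrable_min_sq_self hG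
    (hg.differentiable (by simp)) hL hK
end
end

section
/- Assume (H0), fix h > 0, and let G_k = G_{k,h} be the Grünwald coefficients (with G_k = 0 for k < 0). Let φ_h(β) = e^{hβ} ψ((1−e^{−hβ})/h) = Σ_{k=0}^∞ G_k e^{h(1−k)β} for β ≥ 0; φ_h is strictly increasing on [0,∞) with φ_h(0)=0, and admits an inverse φ_h^{−1} on its range. For β > 0 in the range of φ_h, define the doubly infinite vector y = (y_n)_{n∈ℤ} by y_n = e^{h(n−1)φ_h^{−1}(β)} for n ≤ 0 and y_n = (1/β) Σ_{k=n}^∞ G_{k+1} e^{h(n−1−k)φ_h^{−1}(β)} for n > 0. Then for every n ∈ ℤ: β·y_n − Σ_{k=−∞}^{0} G_{n−k+1} · y_k = G_0 if n = 0, and = 0 otherwise (all series converging absolutely). Equivalently, (βI − G_stop^T) y = G_0 e_0, where G_stop = (g_{i,j})_{i,j∈ℤ} with g_{i,j} = G_{j−i+1} for i ≤ 0 and g_{i,j} = 0 for i > 0, and e_0 is the coordinate vector at 0. -/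
open MeasureTheory Set Filter Topology

noncomputable section

/-- `φ_h(β) = e^{hβ} ψ((1−e^{−hβ})/h) = Σ_{k≥0} G_k e^{h(1−k)β}`. -/
noncomputable def phiExp (G : ℤ → ℝ) (h β : ℝ) : ℝ :=
  ∑' k : ℕ, G (k : ℤ) * Real.exp (h * (1 - (k : ℝ)) * β)

/-- The candidate resolvent vector `y = y(β)` (with `θ = φ_h^{−1}(β)`):
`y_n = e^{h(n−1)θ}` for `n ≤ 0` and `y_n = (1/β) Σ_{k≥n} G_{k+1} e^{h(n−1−k)θ}` for
`n > 0`. -/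
noncomputable def resVec (G : ℤ → ℝ) (h θ β : ℝ) : ℤ → ℝ :=
  fun n => if n ≤ 0 then Real.exp (h * ((n : ℝ) - 1) * θ)
    else (1 / β) * ∑' m : ℕ, G (n + (m : ℤ) + 1) * Real.exp (h * (-1 - (m : ℝ)) * θ)

/-! The `j`-th coefficient of `e^{-(1-ξ)t} - 1 + (1-ξ)t` in powers of `ξ` is the Poisson weight
`e^{-t} t^j / j!`, corrected for `j ≤ 1` so that the coefficients sum to `0`. Their absolute values
sum to `2t(1 - e^{-t})`, which is `μ`-integrable at `t = y / h`. Integrating term by term expands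
`ψ((1-ξ)/h)` on the closed disc `|ξ| ≤ 1`, and by uniqueness of power series these are the Grünwald
coefficients. Hence the series for `φ_h` converges on all of `[0,∞)`, endpoint included, with sum
`e^{hθ} ψ((1-e^{-hθ})/h)`.

For `n ≤ 0` the `n`-th entry of the resolvent equation is then `e^{h(n-1)θ}` times the series for
`φ_h(θ) = β` without its term `k = n`, which vanishes unless `n = 0`; for `n > 0` it is the
definition of `y_n`. -/

section Series

theorem eq_of_eventually_hasSum_mul_pow {𝕜 : Type*} [NontriviallyNormedField 𝕜] {a b : ℕ → 𝕜}
    {f : 𝕜 → 𝕜} (ha : ∀ᶠ z in 𝓝 0, HasSum (fun n ↦ a n * z ^ n) (f z))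
    (hb : ∀ᶠ z in 𝓝 0, HasSum (fun n ↦ b n * z ^ n) (f z)) : a = b := by
  have hanalytic {c : ℕ → 𝕜} (hc : ∀ᶠ z in 𝓝 0, HasSum (fun n ↦ c n * z ^ n) (f z)) :
      HasFPowerSeriesAt f (.ofScalars 𝕜 c) 0 := by
    rw [hasFPowerSeriesAt_iff]
    simpa only [FormalMultilinearSeries.coeff_ofScalars, smul_eq_mul, zero_add, mul_comm] using hc
  have hseries := (hanalytic ha).eq_formalMultilinearSeries (hanalytic hb)
  ext n
  simpa only [FormalMultilinearSeries.coeff_ofScalars] using congrArg (·.coeff n) hseries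

variable {M : Type*} [TopologicalSpace M] {f : ℤ → M} {a : M}

theorem hasSum_int_of_hasSum_nat [AddCommMonoid M] (hf : HasSum (fun k : ℕ ↦ f k) a)
    (hneg : ∀ k < 0, f k = 0) : HasSum f a := by
  refine (Nat.cast_injective.hasSum_iff fun k hk ↦ hneg k ?_).1 hf
  simpa only [Nat.range_cast_int, mem_Ici, not_le] using hk

theorem hasSum_nat_add_add_one_of_nonpos [AddCommGroup M] [IsTopologicalAddGroup M]
    (hf : HasSum f a) (hneg : ∀ k < 0, f k = 0) {n : ℤ} (hn : n ≤ 0) :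
    HasSum (fun m : ℕ ↦ f (n + m + 1)) (a - f n) := by
  have hshift : HasSum (fun m : ℤ ↦ f (n + m + 1)) a := by
    simpa only [Function.comp_def, Equiv.coe_addLeft, add_right_comm n 1] using
      (Equiv.addLeft (n + 1)).hasSum_iff.2 hf
  have hremoved := hshift.update (-1) 0
  have hrange : ∀ m ∉ range ((↑) : ℕ → ℤ),
      Function.update (fun m : ℤ ↦ f (n + m + 1)) (-1) 0 m = 0 := by
    intro m hm
    have hm_neg : m < 0 := by simpa only [Nat.range_cast_int, mem_Ici, not_le] using hm
    rcases eq_or_ne m (-1) with rfl | hne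
    · exact Function.update_self ..
    · rw [Function.update_of_ne hne]
      exact hneg _ (by lia)
  have hnat := (Nat.cast_injective.hasSum_iff hrange).2 hremoved
  rw [Function.update_comp_eq_of_notMem_range _ _ (by simp), neg_add_cancel_right, zero_sub,
    neg_add_eq_sub] at hnat
  exact hnat

end Series

section Exponential

theorem exp_neg_sub_one_add_nonneg (t : ℝ) : 0 ≤ Real.exp (-t) - 1 + t := by
  linarith [Real.add_one_le_exp (-t)]

theorem exp_neg_sub_one_add_le (t : ℝ) :
    Real.exp (-t) - 1 + t ≤ t * (1 - Real.exp (-t)) := by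
  have hprod : (t + 1) * Real.exp (-t) ≤ 1 := by
    calc (t + 1) * Real.exp (-t) ≤ Real.exp t * Real.exp (-t) := by
          gcongr
          exact Real.add_one_le_exp t
      _ = 1 := by rw [← Real.exp_add, add_neg_cancel, Real.exp_zero]
  linarith

theorem mul_one_sub_exp_neg_le_min {t : ℝ} (ht : 0 ≤ t) :
    t * (1 - Real.exp (-t)) ≤ min (t ^ 2) t := by
  have hle_t : 1 - Real.exp (-t) ≤ t := by linarith [Real.add_one_le_exp (-t)]
  have hle_one : 1 - Real.exp (-t) ≤ 1 := by linarith [Real.exp_pos (-t)]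
  refine le_min ?_ (mul_le_of_le_one_right ht hle_one)
  rw [sq]
  exact mul_le_mul_of_nonneg_left hle_t ht

theorem strictMonoOn_exp_neg_sub_one_add :
    StrictMonoOn (fun t : ℝ ↦ Real.exp (-t) - 1 + t) (Ici 0) := by
  intro s hs t _ hst
  have hfactor : Real.exp (-t) = Real.exp (-s) * Real.exp (-(t - s)) := by
    rw [← Real.exp_add]
    ring_nf
  have htangent : 1 - (t - s) < Real.exp (-(t - s)) := by
    linarith [Real.add_one_lt_exp (neg_ne_zero.2 (sub_pos.2 hst).ne')]
  have hle_one : Real.exp (-s) ≤ 1 := Real.exp_le_one_iff.2 (neg_nonpos.2 hs)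
  have hlower := mul_lt_mul_of_pos_left htangent (Real.exp_pos (-s))
  have hslope := mul_le_of_le_one_left (sub_pos.2 hst).le hle_one
  change Real.exp (-s) - 1 + s < Real.exp (-t) - 1 + t
  rw [hfactor]
  linarith

/-- The coefficient of `ξ ^ j` in the power series of `e^{-(1-ξ)t} - 1 + (1-ξ)t`: the Poisson
weight `e^{-t} t^j / j!`, compensated in degrees `0` and `1`. Integrated at `t = y / h` it gives the
Grünwald coefficients. -/
def compensatedPoissonWeight (t : ℝ) (j : ℕ) : ℝ :=
  Real.exp (-t) * (t ^ j / j.factorial) - if j = 0 then 1 - t else if j = 1 then t else 0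

theorem continuous_compensatedPoissonWeight (j : ℕ) :
    Continuous fun t ↦ compensatedPoissonWeight t j := by
  unfold compensatedPoissonWeight
  split_ifs <;> fun_prop

theorem hasSum_compensatedPoissonWeight_mul_pow (t ξ : ℝ) :
    HasSum (fun j ↦ compensatedPoissonWeight t j * ξ ^ j)
      (Real.exp (-((1 - ξ) * t)) - 1 + (1 - ξ) * t) := by
  have hpoisson : HasSum (fun j : ℕ ↦ Real.exp (-t) * (t ^ j / j.factorial) * ξ ^ j)
      (Real.exp (-((1 - ξ) * t))) := by
    convert! (NormedSpace.expSeries_div_hasSum_exp (t * ξ)).mul_left (Real.exp (-t)) using 1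
    · ext j
      rw [mul_pow]
      ring
    · rw [← Real.exp_eq_exp_ℝ, ← Real.exp_add]
      ring_nf
  have hlinear : HasSum (fun j : ℕ ↦ (if j = 0 then 1 - t else if j = 1 then t else 0) * ξ ^ j)
      ((1 - t) + t * ξ) := by
    have hvanish : ∀ j ∉ Finset.range 2,
        (if j = 0 then 1 - t else if j = 1 then t else 0) * ξ ^ j = 0 := by
      intro j hj
      rw [Finset.mem_range] at hj
      rw [if_neg (by lia), if_neg (by lia), zero_mul]
    simpa [Finset.sum_range_succ] using hasSum_sum_of_ne_finset_zero hvanish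
  convert! hpoisson.sub hlinear using 1
  · ext j
    exact sub_mul ..
  · ring

theorem abs_compensatedPoissonWeight {t : ℝ} (ht : 0 ≤ t) (j : ℕ) :
    |compensatedPoissonWeight t j| =
      compensatedPoissonWeight t j + if j = 1 then 2 * (t * (1 - Real.exp (-t))) else 0 := by
  rcases eq_or_ne j 1 with rfl | hj
  · have hvalue : compensatedPoissonWeight t 1 = -(t * (1 - Real.exp (-t))) := by
      simp only [compensatedPoissonWeight, pow_one, Nat.factorial_one, Nat.cast_one, div_one,
        one_ne_zero, if_false, if_true]
      ring
    have hnonneg : 0 ≤ t * (1 - Real.exp (-t)) :=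
      (exp_neg_sub_one_add_nonneg t).trans (exp_neg_sub_one_add_le t)
    rw [if_pos rfl, hvalue, abs_neg, abs_of_nonneg hnonneg]
    ring
  · rw [if_neg hj, add_zero, abs_of_nonneg]
    rcases eq_or_ne j 0 with rfl | hj0
    · simpa [compensatedPoissonWeight, sub_add] using exp_neg_sub_one_add_nonneg t
    · rw [compensatedPoissonWeight, if_neg hj0, if_neg hj, sub_zero]
      positivity

theorem hasSum_abs_compensatedPoissonWeight {t : ℝ} (ht : 0 ≤ t) :
    HasSum (fun j ↦ |compensatedPoissonWeight t j|) (2 * (t * (1 - Real.exp (-t)))) := by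
  have hzero : HasSum (compensatedPoissonWeight t) 0 := by
    simpa using hasSum_compensatedPoissonWeight_mul_pow t 1
  simpa only [abs_compensatedPoissonWeight ht, zero_add] using
    hzero.add (hasSum_ite_eq 1 (2 * (t * (1 - Real.exp (-t)))))

end Exponential

section LaplaceExponent

theorem integral_lt_integral_of_ae_lt {α : Type*} [MeasurableSpace α] {μ : Measure α}
    {f g : α → ℝ} (hμ : μ ≠ 0) (hf : Integrable f μ) (hg : Integrable g μ)
    (hfg : ∀ᵐ x ∂μ, f x < g x) : ∫ x, f x ∂μ < ∫ x, g x ∂μ := by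
  have hpos : ∀ᵐ x ∂μ, 0 < (g - f) x := hfg.mono fun _ ↦ sub_pos.2
  have hsupport : Function.support (g - f) =ᵐ[μ] univ :=
    eventuallyEq_univ.2 (hpos.mono fun _ hx ↦ hx.ne')
  rw [← sub_pos, ← integral_sub' hg hf, integral_pos_iff_support_of_nonneg_ae
    (hpos.mono fun _ hx ↦ hx.le) (hg.sub hf), measure_congr hsupport]
  exact Measure.measure_univ_pos.2 hμ

theorem psiH_zero (μ : Measure ℝ) : psiH μ 0 = 0 := by
  simp [psiH]

theorem psiH_nonneg (μ : Measure ℝ) (ξ : ℝ) : 0 ≤ psiH μ ξ :=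
  integral_nonneg fun _ ↦ exp_neg_sub_one_add_nonneg _

variable {μ : Measure ℝ} (hpos : ∀ᵐ y ∂μ, 0 < y) (hint : Integrable (fun y ↦ min (y ^ 2) y) μ)

include hpos hint

theorem integrable_mul_one_sub_exp_neg {c : ℝ} (hc : 0 ≤ c) :
    Integrable (fun y ↦ c * y * (1 - Real.exp (-(c * y)))) μ := by
  refine (hint.const_mul (max (c ^ 2) c)).mono'
    (Continuous.aestronglyMeasurable (by fun_prop)) ?_
  filter_upwards [hpos] with y hy
  have hcy : 0 ≤ c * y := mul_nonneg hc hy.le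
  rw [Real.norm_of_nonneg ((exp_neg_sub_one_add_nonneg _).trans (exp_neg_sub_one_add_le _))]
  calc c * y * (1 - Real.exp (-(c * y)))
      ≤ min (c ^ 2 * y ^ 2) (c * y) := by
        simpa only [mul_pow] using mul_one_sub_exp_neg_le_min hcy
    _ ≤ min (max (c ^ 2) c * y ^ 2) (max (c ^ 2) c * y) := by
        gcongr
        · exact le_max_left ..
        · exact le_max_right ..
    _ = max (c ^ 2) c * min (y ^ 2) y :=
        (mul_min_of_nonneg _ _ (le_max_of_le_right hc)).symm

theorem integrable_exp_neg_sub_one_add {c : ℝ} (hc : 0 ≤ c) :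
    Integrable (fun y ↦ Real.exp (-(c * y)) - 1 + c * y) μ := by
  refine (integrable_mul_one_sub_exp_neg hpos hint hc).mono'
    (Continuous.aestronglyMeasurable (by fun_prop)) (.of_forall fun y ↦ ?_)
  rw [Real.norm_of_nonneg (exp_neg_sub_one_add_nonneg _)]
  exact exp_neg_sub_one_add_le _

theorem strictMonoOn_psiH (hμ : μ ≠ 0) : StrictMonoOn (psiH μ) (Ici 0) := by
  intro a ha b hb hab
  refine integral_lt_integral_of_ae_lt hμ (integrable_exp_neg_sub_one_add hpos hint ha)
    (integrable_exp_neg_sub_one_add hpos hint hb) ?_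
  filter_upwards [hpos] with y hy
  exact strictMonoOn_exp_neg_sub_one_add (mul_nonneg ha hy.le) (mul_nonneg hb hy.le)
    (mul_lt_mul_of_pos_right hab hy)

theorem hasSum_integral_compensatedPoissonWeight_mul_pow {h ξ : ℝ} (hh : 0 < h) (hξ : |ξ| ≤ 1) :
    HasSum (fun j ↦ (∫ y, compensatedPoissonWeight (y / h) j ∂μ) * ξ ^ j)
      (psiH μ ((1 - ξ) / h)) := by
  have habs : ∀ᵐ y ∂μ, HasSum (fun j ↦ |compensatedPoissonWeight (y / h) j|)
      (2 * (y / h * (1 - Real.exp (-(y / h))))) :=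
    hpos.mono fun y hy ↦ hasSum_abs_compensatedPoissonWeight (div_nonneg hy.le hh.le)
  simp only [psiH, ← integral_mul_const]
  refine hasSum_integral_of_dominated_convergence
    (fun j y ↦ |compensatedPoissonWeight (y / h) j|) (fun j ↦ ?_) (fun j ↦ ?_)
    (habs.mono fun y hy ↦ hy.summable) ?_ (.of_forall fun y ↦ ?_)
  · have hcont := continuous_compensatedPoissonWeight j
    exact Continuous.aestronglyMeasurable (by fun_prop)
  · refine .of_forall fun y ↦ ?_
    rw [Real.norm_eq_abs, abs_mul, abs_pow]
    exact mul_le_of_le_one_right (abs_nonneg _) (pow_le_one₀ (abs_nonneg ξ) hξ)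
  · refine (((integrable_mul_one_sub_exp_neg hpos hint (inv_nonneg.2 hh.le)).const_mul 2).congr ?_)
    filter_upwards [habs] with y hy
    rw [hy.tsum_eq, div_eq_inv_mul]
  · rw [div_mul_comm, mul_comm]
    exact hasSum_compensatedPoissonWeight_mul_pow (y / h) ξ

theorem hasSum_grunwald_of_abs_le_one {h : ℝ} (hh : 0 < h) {g : ℕ → ℝ}
    (hg : ∀ ξ : ℝ, |ξ| < 1 → HasSum (fun j ↦ g j * ξ ^ j) (psiH μ ((1 - ξ) / h)))
    {ξ : ℝ} (hξ : |ξ| ≤ 1) : HasSum (fun j ↦ g j * ξ ^ j) (psiH μ ((1 - ξ) / h)) := by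
  have hdisc : ∀ᶠ ξ : ℝ in 𝓝 0, |ξ| < 1 :=
    continuous_abs.continuousAt.eventually_lt_const (by simp)
  have hcoeff : g = fun j ↦ ∫ y, compensatedPoissonWeight (y / h) j ∂μ :=
    eq_of_eventually_hasSum_mul_pow (hdisc.mono hg) (hdisc.mono fun ξ hξ ↦
      hasSum_integral_compensatedPoissonWeight_mul_pow hpos hint hh hξ.le)
  rw [hcoeff]
  exact hasSum_integral_compensatedPoissonWeight_mul_pow hpos hint hh hξ

theorem strictMonoOn_exp_mul_psiH (hμ : μ ≠ 0) {h : ℝ} (hh : 0 < h) :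
    StrictMonoOn (fun θ ↦ Real.exp (h * θ) * psiH μ ((1 - Real.exp (-(h * θ))) / h)) (Ici 0) := by
  have harg_nonneg {θ : ℝ} (hθ : 0 ≤ θ) : 0 ≤ (1 - Real.exp (-(h * θ))) / h :=
    div_nonneg (sub_nonneg.2 (Real.exp_le_one_iff.2 (neg_nonpos.2 (by positivity)))) hh.le
  intro a ha b hb hab
  have harg_lt : (1 - Real.exp (-(h * a))) / h < (1 - Real.exp (-(h * b))) / h := by gcongr
  exact mul_lt_mul'' (by gcongr)
    (strictMonoOn_psiH hpos hint hμ (harg_nonneg ha) (harg_nonneg hb) harg_lt)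
    (Real.exp_pos _).le (psiH_nonneg μ _)

theorem hasSum_phiExp {h : ℝ} (hh : 0 < h) {G : ℤ → ℝ}
    (hG : ∀ ξ : ℝ, |ξ| < 1 → HasSum (fun j : ℕ ↦ G j * ξ ^ j) (psiH μ ((1 - ξ) / h)))
    {θ : ℝ} (hθ : 0 ≤ θ) :
    HasSum (fun k : ℕ ↦ G k * Real.exp (h * (1 - k) * θ))
      (Real.exp (h * θ) * psiH μ ((1 - Real.exp (-(h * θ))) / h)) := by
  have hdisc : |Real.exp (-(h * θ))| ≤ 1 := by
    rw [Real.abs_exp]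
    exact Real.exp_le_one_iff.2 (neg_nonpos.2 (mul_nonneg hh.le hθ))
  convert! (hasSum_grunwald_of_abs_le_one hpos hint hh hG hdisc).mul_left (Real.exp (h * θ)) using 1
  ext k
  rw [← Real.exp_nat_mul, mul_left_comm, ← Real.exp_add]
  ring_nf

end LaplaceExponent

section ResolventVector

variable {G : ℤ → ℝ} {h θ β : ℝ}

theorem resVec_of_nonpos {n : ℤ} (hn : n ≤ 0) :
    resVec G h θ β n = Real.exp (h * (n - 1) * θ) :=
  if_pos hn

theorem mul_resVec_of_pos (hβ : β ≠ 0) {n : ℤ} (hn : 0 < n) :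
    β * resVec G h θ β n = ∑' m : ℕ, G (n + m + 1) * Real.exp (h * (-1 - m) * θ) := by
  rw [resVec, if_neg hn.not_ge, ← mul_assoc, mul_one_div_cancel hβ, one_mul]

theorem coeff_mul_exp_shift (n : ℤ) (m : ℕ) :
    G (n + m + 1) * Real.exp (h * (-1 - m) * θ) =
      Real.exp (h * (n - 1) * θ) *
        (G (n + m + 1) * Real.exp (h * (1 - (n + m + 1 : ℤ)) * θ)) := by
  rw [mul_left_comm, ← Real.exp_add]
  push_cast
  ring_nf

theorem summable_coeff_mul_exp_shift
    (hsum : Summable fun k : ℤ ↦ G k * Real.exp (h * (1 - k) * θ)) (n : ℤ) :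
    Summable fun m : ℕ ↦ G (n + m + 1) * Real.exp (h * (-1 - m) * θ) := by
  have hinj : Function.Injective fun m : ℕ ↦ n + m + 1 := fun _ _ hm ↦ by simpa using hm
  simp only [coeff_mul_exp_shift]
  exact (hsum.comp_injective hinj).mul_left (Real.exp (h * (n - 1) * θ))

theorem hasSum_coeff_mul_exp_shift_of_nonpos (hGneg : ∀ k < 0, G k = 0)
    (hsum : HasSum (fun k : ℤ ↦ G k * Real.exp (h * (1 - k) * θ)) β) {n : ℤ} (hn : n ≤ 0) :
    HasSum (fun m : ℕ ↦ G (n + m + 1) * Real.exp (h * (-1 - m) * θ))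
      (β * Real.exp (h * (n - 1) * θ) - G n) := by
  have htail := (hasSum_nat_add_add_one_of_nonpos hsum
    (fun k hk ↦ by rw [hGneg k hk, zero_mul]) hn).mul_left (Real.exp (h * (n - 1) * θ))
  have hdiagonal : Real.exp (h * (n - 1) * θ) * (G n * Real.exp (h * (1 - n) * θ)) = G n := by
    rw [mul_left_comm, ← Real.exp_add]
    rw [show h * (n - 1) * θ + h * (1 - n) * θ = 0 by ring, Real.exp_zero, mul_one]
  rw [mul_sub (Real.exp _), hdiagonal, mul_comm _ β] at htail
  simpa only [coeff_mul_exp_shift] using htail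

theorem hasSum_mul_resVec (hGneg : ∀ k < 0, G k = 0) (hβ : β ≠ 0)
    (hsum : HasSum (fun k : ℤ ↦ G k * Real.exp (h * (1 - k) * θ)) β) (n : ℤ) :
    HasSum (fun m : ℕ ↦ G (n + m + 1) * resVec G h θ β (-m))
      (β * resVec G h θ β n - if n = 0 then G 0 else 0) := by
  have hentry (m : ℕ) : resVec G h θ β (-m) = Real.exp (h * (-1 - m) * θ) := by
    rw [resVec_of_nonpos (by lia)]
    push_cast
    ring_nf
  simp only [hentry]
  rcases le_or_gt n 0 with hn | hn
  · have hGn : (if n = 0 then G 0 else 0) = G n := by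
      split_ifs with h0
      · rw [h0]
      · exact (hGneg n (by lia)).symm
    rw [resVec_of_nonpos hn, hGn]
    exact hasSum_coeff_mul_exp_shift_of_nonpos hGneg hsum hn
  · rw [mul_resVec_of_pos hβ hn, if_neg hn.ne', sub_zero]
    exact (summable_coeff_mul_exp_shift hsum.summable n).hasSum

end ResolventVector

theorem resolvent_vector_identity_general {μ : Measure ℝ} (hμ : μ ≠ 0)
    (hpos : ∀ᵐ y ∂μ, 0 < y) (hint : Integrable (fun y ↦ min (y ^ 2) y) μ) {h : ℝ} (hh : 0 < h)
    {G : ℤ → ℝ} (hGneg : ∀ k < 0, G k = 0)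
    (hG : ∀ ξ : ℝ, |ξ| < 1 → HasSum (fun j : ℕ ↦ G j * ξ ^ j) (psiH μ ((1 - ξ) / h))) :
    StrictMonoOn (phiExp G h) (Ici 0) ∧ phiExp G h 0 = 0 ∧
    ∀ β θ : ℝ, 0 < β → 0 ≤ θ → phiExp G h θ = β →
      (∀ n : ℤ, 0 < n → Summable fun m : ℕ ↦ G (n + m + 1) * Real.exp (h * (-1 - m) * θ)) ∧
      ∀ n : ℤ, HasSum (fun m : ℕ ↦ G (n + m + 1) * resVec G h θ β (-m))
        (β * resVec G h θ β n - if n = 0 then G 0 else 0) := by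
  have hphi {θ : ℝ} (hθ : 0 ≤ θ) :
      phiExp G h θ = Real.exp (h * θ) * psiH μ ((1 - Real.exp (-(h * θ))) / h) :=
    (hasSum_phiExp hpos hint hh hG hθ).tsum_eq
  refine ⟨(strictMonoOn_exp_mul_psiH hpos hint hμ hh).congr fun θ hθ ↦ (hphi hθ).symm, ?_, ?_⟩
  · simp [hphi le_rfl, psiH_zero]
  · intro β θ hβ hθ hβθ
    have hsum : HasSum (fun k : ℤ ↦ G k * Real.exp (h * (1 - k) * θ)) β := by
      rw [← hβθ]
      exact hasSum_int_of_hasSum_nat (hasSum_phiExp hpos hint hh hG hθ).summable.hasSum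
        fun k hk ↦ by rw [hGneg k hk, zero_mul]
    exact ⟨fun n _ ↦ summable_coeff_mul_exp_shift hsum.summable n,
      hasSum_mul_resVec hGneg hβ.ne' hsum⟩

namespace H0

variable {μ : Measure ℝ} (h0 : H0 μ)

include h0

theorem ae_pos_s16 : ∀ᵐ y ∂μ, 0 < y := by
  simp only [ae_iff, not_lt]
  exact h0.1

theorem integrable_min : Integrable (fun y ↦ min (y ^ 2) y) μ := by
  refine ⟨Continuous.aestronglyMeasurable (by fun_prop), ?_⟩
  rw [hasFiniteIntegral_iff_ofReal (h0.ae_pos_s16.mono fun y hy ↦ le_min (sq_nonneg y) hy.le)]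
  exact h0.2.1

theorem ne_zero : μ ≠ 0 := by
  rintro rfl
  simpa using h0.2.2

end H0

/-- Lemma 3.23 / `resy*`. Under (H0) and for `h > 0`, with the
Grünwald coefficients `G_k = G_{k,h}` (`G_k = 0` for `k < 0`), the function
`φ_h(β) = Σ_k G_k e^{h(1−k)β}` is strictly increasing on `[0,∞)` with `φ_h(0) = 0`, and
for every `β > 0` in its range (say `β = φ_h(θ)`, `θ ≥ 0`) the vector `y` defined above
satisfies (with all series converging absolutely)
`β y_n − Σ_{k ≤ 0} G_{n−k+1} y_k = G_0·1{n=0}`, i.e. `(βI − G_stopᵀ) y = G_0 e_0`. -/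
theorem resolvent_vector_identity (μ : Measure ℝ) (h0 : H0 μ) (h : ℝ) (hh : 0 < h)
    (G : ℤ → ℝ) (hGneg : ∀ k : ℤ, k < 0 → G k = 0)
    (hG : ∀ ξ : ℝ, |ξ| < 1 →
      HasSum (fun j : ℕ => G (j : ℤ) * ξ ^ j) (psiH μ ((1 - ξ) / h))) :
    StrictMonoOn (phiExp G h) (Ici 0) ∧ phiExp G h 0 = 0 ∧
    (∀ β θ : ℝ, 0 < β → 0 ≤ θ → phiExp G h θ = β →
      (∀ n : ℤ, 0 < n →
        Summable (fun m : ℕ => G (n + (m : ℤ) + 1) * Real.exp (h * (-1 - (m : ℝ)) * θ))) ∧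
      (∀ n : ℤ,
        HasSum (fun m : ℕ => G (n + (m : ℤ) + 1) * resVec G h θ β (-(m : ℤ)))
          (β * resVec G h θ β n - (if n = 0 then G 0 else 0)))) :=
  resolvent_vector_identity_general h0.ne_zero h0.ae_pos_s16 h0.integrable_min hh hGneg hG
end
end
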